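/- arXiv:1707.00818 — 11 statements merged into one kernel-verified Lean document; each statement's English description precedes it below -/
import Mathlib

section
/- Let τ and τ' be points of the upper half-plane ℍ ⊂ ℂ, and let w : ℂ → ℂ be the unique ℝ-linear map satisfying w(1/√(Im τ)) = 1/√(Im τ') and w(τ/√(Im τ)) = τ'/√(Im τ'). Then log ‖w‖ = (1/2) · dist(τ, τ'), where ‖w‖ is the operator norm of w with respect to the complex absolute value on ℂ and dist is the hyperbolic (Poincaré) distance on the upper half-plane. -/
/-!
Every `ℝ`-linear map of `ℂ` has the form `z ↦ a z + b z̄`, and its norm is `‖a‖ + ‖b‖`: the triangle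
inequality gives `≤`, and equality holds at a unit vector `u` for which `a u` and `b ū` point in the
same direction. The map `z ↦ (τ' - τ̄) z + (τ - τ') z̄` sends `1` to `τ - τ̄` and `τ` to
`τ' (τ - τ̄)`, so the normalized affine map is this map divided by `2 i √(Im τ Im τ')`. Its norm is
therefore `(|τ - τ̄'| + |τ - τ'|) / (2 √(Im τ Im τ'))`, which is `exp (dist τ τ' / 2)`.
-/

section RealLinearMaps

open Complex
open scoped ComplexConjugate

theorem exists_norm_mul_add_mul_conj_eq (a b : ℂ) :
    ∃ u : ℂ, ‖u‖ = 1 ∧ ‖a * u + b * conj u‖ = ‖a‖ + ‖b‖ := by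
  -- Multiplying by `u` and by `ū` turns both arguments into their average.
  let u := exp (((b.arg - a.arg) / 2 : ℝ) * I)
  let v := exp (((a.arg + b.arg) / 2 : ℝ) * I)
  have hau : a * u = ‖a‖ * v := by
    rw [← norm_mul_exp_arg_mul_I a, mul_assoc, ← Complex.exp_add, norm_mul_exp_arg_mul_I]
    congr 2
    push_cast
    ring
  have hbu : b * conj u = ‖b‖ * v := by
    rw [← norm_mul_exp_arg_mul_I b, ← exp_conj, mul_assoc, ← Complex.exp_add,
      norm_mul_exp_arg_mul_I, map_mul, conj_ofReal, conj_I]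
    congr 2
    push_cast
    ring
  refine ⟨u, norm_exp_ofReal_mul_I _, ?_⟩
  rw [hau, hbu, ← add_mul, norm_mul, norm_exp_ofReal_mul_I, mul_one, ← ofReal_add,
    norm_real, Real.norm_of_nonneg (by positivity)]

theorem norm_smul_id_add_smul_conjCLE (a b : ℂ) :
    ‖a • ContinuousLinearMap.id ℝ ℂ + b • (conjCLE : ℂ →L[ℝ] ℂ)‖ = ‖a‖ + ‖b‖ := by
  apply le_antisymm
  · refine ContinuousLinearMap.opNorm_le_bound _ (by positivity) fun z => ?_
    calc ‖a * z + b * conj z‖ ≤ ‖a * z‖ + ‖b * conj z‖ := norm_add_le _ _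
      _ = (‖a‖ + ‖b‖) * ‖z‖ := by rw [norm_mul, norm_mul, norm_conj, add_mul]
  · obtain ⟨u, hu, hnorm⟩ := exists_norm_mul_add_mul_conj_eq a b
    let w : ℂ →L[ℝ] ℂ := a • ContinuousLinearMap.id ℝ ℂ + b • (conjCLE : ℂ →L[ℝ] ℂ)
    exact hnorm.symm.trans_le (w.unit_le_opNorm u hu.le)

theorem basisOneI_det_pair (u v : ℂ) : basisOneI.det ![u, v] = (conj u * v).im := by
  rw [Module.Basis.det_apply, Matrix.det_fin_two]
  simp only [Module.Basis.toMatrix, coe_basisOneI_repr, Matrix.cons_val_zero, Matrix.cons_val_one,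
    Matrix.cons_val_fin_one, mul_im, conj_re, conj_im]
  ring

theorem span_pair_eq_top_of_im_conj_mul_ne_zero {u v : ℂ} (h : (conj u * v).im ≠ 0) :
    Submodule.span ℝ {u, v} = ⊤ := by
  have hdet : IsUnit (basisOneI.det ![u, v]) := by
    rwa [basisOneI_det_pair, isUnit_iff_ne_zero]
  simpa only [Matrix.range_cons, Matrix.range_empty, Set.union_empty, Set.singleton_union]
    using (basisOneI.is_basis_iff_det.mpr hdet).2

end RealLinearMaps

section NormalizedAffineMap

open Complex
open scoped ComplexConjugate UpperHalfPlane

/-- The normalized affine map from `τ` to `τ'`: the `ℝ`-linear map of `ℂ` that carries the basis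
`1 / √(Im τ)`, `τ / √(Im τ)` of a unit-area lattice to the corresponding basis for `τ'`. It is
given by its coefficients on `z` and `z̄`. -/
noncomputable def normalizedAffineMap (τ τ' : ℍ) : ℂ →L[ℝ] ℂ :=
  (((τ' : ℂ) - conj (τ : ℂ)) / (2 * I * √(τ.im * τ'.im))) • ContinuousLinearMap.id ℝ ℂ +
    (((τ : ℂ) - τ') / (2 * I * √(τ.im * τ'.im))) • (conjCLE : ℂ →L[ℝ] ℂ)

theorem normalizedAffineMap_apply (τ τ' : ℍ) (z : ℂ) :
    normalizedAffineMap τ τ' z =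
      (((τ' : ℂ) - conj (τ : ℂ)) * z + (τ - τ') * conj z) / (2 * I * √(τ.im * τ'.im)) := by
  change _ / _ * z + _ / _ * conj z = _
  ring

theorem sub_conj_div_sqrt_im_div (τ τ' : ℍ) :
    ((τ : ℂ) - conj (τ : ℂ)) / √τ.im / (2 * I * √(τ.im * τ'.im)) = 1 / √τ'.im := by
  have hs : (√τ.im : ℂ) ≠ 0 := ofReal_ne_zero.mpr (Real.sqrt_ne_zero'.mpr τ.im_pos)
  have hsq : (√τ.im : ℂ) ^ 2 = τ.im := by rw [← ofReal_pow, Real.sq_sqrt τ.im_pos.le]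
  rw [sub_conj, UpperHalfPlane.coe_im, Real.sqrt_mul τ.im_pos.le]
  push_cast
  rw [← hsq]
  field_simp

theorem normalizedAffineMap_one_div_sqrt_im (τ τ' : ℍ) :
    normalizedAffineMap τ τ' (1 / √τ.im) = 1 / √τ'.im := by
  rw [normalizedAffineMap_apply, ← sub_conj_div_sqrt_im_div τ τ', map_div₀, map_one, conj_ofReal]
  ring

theorem normalizedAffineMap_div_sqrt_im (τ τ' : ℍ) :
    normalizedAffineMap τ τ' (τ / √τ.im) = τ' / √τ'.im := by
  rw [normalizedAffineMap_apply, div_eq_mul_one_div (τ' : ℂ), ← sub_conj_div_sqrt_im_div τ τ',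
    map_div₀, conj_ofReal]
  ring

theorem im_conj_one_div_sqrt_im_mul (τ : ℍ) :
    (conj (1 / √τ.im : ℂ) * (τ / √τ.im)).im = 1 := by
  have hmul : conj (1 / √τ.im : ℂ) * (τ / √τ.im) = τ / (τ.im : ℝ) := by
    rw [map_div₀, map_one, conj_ofReal, div_mul_div_comm, one_mul, ← ofReal_mul,
      Real.mul_self_sqrt τ.im_pos.le]
  rw [hmul, div_ofReal_im, UpperHalfPlane.coe_im, div_self τ.im_ne_zero]

theorem eq_normalizedAffineMap {τ τ' : ℍ} {w : ℂ →L[ℝ] ℂ}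
    (h_one : w (1 / √τ.im) = 1 / √τ'.im) (h_coe : w (τ / √τ.im) = τ' / √τ'.im) :
    w = normalizedAffineMap τ τ' := by
  have hspan : Submodule.span ℝ {(1 / √τ.im : ℂ), (τ / √τ.im : ℂ)} = ⊤ :=
    span_pair_eq_top_of_im_conj_mul_ne_zero (by rw [im_conj_one_div_sqrt_im_mul]; exact one_ne_zero)
  refine ContinuousLinearMap.coe_injective (LinearMap.ext_on hspan ?_)
  rintro z (rfl | rfl)
  · exact h_one.trans (normalizedAffineMap_one_div_sqrt_im τ τ').symm
  · exact h_coe.trans (normalizedAffineMap_div_sqrt_im τ τ').symm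

theorem norm_normalizedAffineMap (τ τ' : ℍ) :
    ‖normalizedAffineMap τ τ'‖ = Real.exp (dist τ τ' / 2) := by
  have hdist : ‖(τ' : ℂ) - conj (τ : ℂ)‖ = dist (τ : ℂ) (conj (τ' : ℂ)) := by
    rw [← dist_eq, dist_comm, dist_conj_comm]
  have hden : ‖2 * I * (√(τ.im * τ'.im) : ℂ)‖ = 2 * √(τ.im * τ'.im) := by
    simp
  rw [normalizedAffineMap, norm_smul_id_add_smul_conjCLE, norm_div, norm_div, hdist, hden,
    ← dist_eq, ← add_div, add_comm, UpperHalfPlane.exp_half_dist]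

end NormalizedAffineMap

/-- Thurston's Lipschitz metric on the Teichmüller space of unit-area flat tori equals
half the hyperbolic metric: if `w` is the unique ℝ-linear map sending the normalized
lattice basis of `τ` to that of `τ'`, then `log ‖w‖ = dist τ τ' / 2`. -/
theorem stmt_0 (τ τ' : UpperHalfPlane) (w : ℂ →L[ℝ] ℂ)
    (h1 : w (1 / (Real.sqrt τ.im : ℂ)) = 1 / (Real.sqrt τ'.im : ℂ))
    (h2 : w ((τ : ℂ) / (Real.sqrt τ.im : ℂ)) = (τ' : ℂ) / (Real.sqrt τ'.im : ℂ)) :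
    Real.log ‖w‖ = dist τ τ' / 2 := by
  rw [eq_normalizedAffineMap h1 h2, norm_normalizedAffineMap, Real.log_exp]
end

section
/- Let τ and τ' be points of the upper half-plane ℍ ⊂ ℂ. Let w be the normalized affine map from τ to τ' (the unique ℝ-linear map with w(1/√(Im τ)) = 1/√(Im τ') and w(τ/√(Im τ)) = τ'/√(Im τ')), and let w' be the normalized affine map from τ' to τ. Then ‖w‖ = ‖w'‖, where ‖·‖ denotes the operator norm with respect to the complex absolute value on ℂ. (Hence Thurston's Lipschitz metric λ is symmetric on the Teichmüller space of the torus.) -/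
/-!
Multiplication by `i` turns the real inner product of `ℂ` into the area form `ω`. Hence, if
`ω (w x) y = ω x (w' y)`, then `w'` is conjugate by this rotation to the transpose of `w`, and
`‖w‖ = ‖w'‖`. For `w' = w⁻¹` the adjunction says that `w` preserves area, which is the case
because the normalized bases `(1 / √(Im τ), τ / √(Im τ))` all span parallelograms of area `1`.
-/

open Module

attribute [local instance] Complex.finrank_real_complex_fact

section IsAlt

variable {R M : Type*} [CommRing R] [AddCommGroup M] [Module R M] {B B' : M →ₗ[R] M →ₗ[R] R}

theorem linearIndependent_pair_of_isAlt_of_ne_zero [NoZeroDivisors R] (hB : B.IsAlt) {u v : M}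
    (h : B u v ≠ 0) : LinearIndependent R ![u, v] := by
  refine LinearIndependent.pair_iff.2 fun s t hst => ⟨?_, ?_⟩
  · simpa [h, hB.self_eq_zero] using congrArg (B · v) hst
  · simpa [h, hB.self_eq_zero] using congrArg (B u) hst

theorem eq_of_isAlt_of_basis_fin_two (hB : B.IsAlt) (hB' : B'.IsAlt) (b : Basis (Fin 2) R M)
    (h : B (b 0) (b 1) = B' (b 0) (b 1)) : B = B' := by
  refine LinearMap.ext_basis b b fun i j => ?_
  fin_cases i <;> fin_cases j <;>
    simp [h, hB.self_eq_zero, hB'.self_eq_zero, ← hB.neg (b 0) (b 1), ← hB'.neg (b 0) (b 1)]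

end IsAlt

section AreaForm

variable {E F : Type*} [NormedAddCommGroup E] [InnerProductSpace ℝ E] [Fact (finrank ℝ E = 2)]
  [NormedAddCommGroup F] [InnerProductSpace ℝ F] [Fact (finrank ℝ F = 2)]
  (oE : Orientation ℝ E (Fin 2)) (oF : Orientation ℝ F (Fin 2))

theorem areaForm_map_map_of_basis (b : Basis (Fin 2) ℝ E) {f : E →ₗ[ℝ] F}
    (h : oF.areaForm (f (b 0)) (f (b 1)) = oE.areaForm (b 0) (b 1)) (x y : E) :
    oF.areaForm (f x) (f y) = oE.areaForm x y :=
  LinearMap.congr_fun₂ (f := oF.areaForm.compl₁₂ f f)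
    (eq_of_isAlt_of_basis_fin_two (fun z => oF.areaForm_apply_self (f z))
      oE.areaForm_apply_self b h) x y

open ContinuousLinearMap in
theorem norm_eq_norm_of_isAdjointPair_areaForm {f : E →L[ℝ] F} {g : F →L[ℝ] E}
    (h : LinearMap.IsAdjointPair oE.areaForm oF.areaForm f g) : ‖f‖ = ‖g‖ := by
  have := FiniteDimensional.of_fact_finrank_eq_two (K := ℝ) (V := E)
  have := FiniteDimensional.of_fact_finrank_eq_two (K := ℝ) (V := F)
  have := FiniteDimensional.complete ℝ E
  have := FiniteDimensional.complete ℝ F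
  have rotation_comp_eq (x : E) :
      oF.rightAngleRotation (f x) = adjoint g (oE.rightAngleRotation x) := by
    refine ext_inner_right ℝ fun y => ?_
    rw [adjoint_inner_left, oF.inner_rightAngleRotation_left, oE.inner_rightAngleRotation_left, h]
  calc ‖f‖ = ‖adjoint g ∘L (oE.rightAngleRotation : E →L[ℝ] E)‖ :=
        opNorm_ext _ _ fun x => by simp [← rotation_comp_eq]
    _ = ‖adjoint g‖ := opNorm_comp_linearIsometryEquiv _ _
    _ = ‖g‖ := adjoint.norm_map g

theorem norm_eq_norm_of_basis_of_areaForm_eq {b : Basis (Fin 2) ℝ E} {b' : Basis (Fin 2) ℝ F}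
    (hω : oE.areaForm (b 0) (b 1) = oF.areaForm (b' 0) (b' 1)) {f : E →L[ℝ] F} {g : F →L[ℝ] E}
    (hf : ∀ i, f (b i) = b' i) (hg : ∀ i, g (b' i) = b i) : ‖f‖ = ‖g‖ := by
  have area_map (x y : E) : oF.areaForm (f x) (f y) = oE.areaForm x y :=
    areaForm_map_map_of_basis oE oF b (f := f) (by simp [hf, hω]) x y
  have map_map : (f : E →ₗ[ℝ] F) ∘ₗ g = LinearMap.id := b'.ext fun i => by simp [hf, hg]
  refine norm_eq_norm_of_isAdjointPair_areaForm oE oF fun x y => ?_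
  calc oF.areaForm (f x) y = oF.areaForm (f x) (f (g y)) := by
        rw [show f (g y) = y from LinearMap.congr_fun map_map y]
    _ = oE.areaForm x (g y) := area_map x (g y)

end AreaForm

theorem areaForm_one_div_sqrt_im_div_sqrt_im (τ : UpperHalfPlane) :
    Complex.orientation.areaForm (1 / (√τ.im : ℂ)) ((τ : ℂ) / (√τ.im : ℂ)) = 1 := by
  rw [Complex.areaForm]
  simp [field, τ.im_pos.le]

/-- The basis `(1 / √(Im τ), τ / √(Im τ))` of `ℂ`, marking the torus with modulus `τ` and unit
area. Normalized affine maps are the linear maps carrying one such basis to another. -/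
noncomputable def normalizedBasis (τ : UpperHalfPlane) : Basis (Fin 2) ℝ ℂ :=
  basisOfLinearIndependentOfCardEqFinrank
    (linearIndependent_pair_of_isAlt_of_ne_zero Complex.orientation.areaForm_apply_self
      (areaForm_one_div_sqrt_im_div_sqrt_im τ ▸ one_ne_zero))
    (by simp)

@[simp]
theorem normalizedBasis_zero (τ : UpperHalfPlane) :
    normalizedBasis τ 0 = 1 / (√τ.im : ℂ) := by
  simp [normalizedBasis]

@[simp]
theorem normalizedBasis_one (τ : UpperHalfPlane) :
    normalizedBasis τ 1 = (τ : ℂ) / (√τ.im : ℂ) := by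
  simp [normalizedBasis]

theorem areaForm_normalizedBasis (τ : UpperHalfPlane) :
    Complex.orientation.areaForm (normalizedBasis τ 0) (normalizedBasis τ 1) = 1 := by
  rw [normalizedBasis_zero, normalizedBasis_one, areaForm_one_div_sqrt_im_div_sqrt_im]

/-- The normalized affine map from `τ` to `τ'` and the one from `τ'` to `τ` have the
same operator norm; hence Thurston's Lipschitz metric on `𝒯₁` is symmetric. -/
theorem stmt_1 (τ τ' : UpperHalfPlane) (w w' : ℂ →L[ℝ] ℂ)
    (h1 : w (1 / (Real.sqrt τ.im : ℂ)) = 1 / (Real.sqrt τ'.im : ℂ))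
    (h2 : w ((τ : ℂ) / (Real.sqrt τ.im : ℂ)) = (τ' : ℂ) / (Real.sqrt τ'.im : ℂ))
    (h1' : w' (1 / (Real.sqrt τ'.im : ℂ)) = 1 / (Real.sqrt τ.im : ℂ))
    (h2' : w' ((τ' : ℂ) / (Real.sqrt τ'.im : ℂ)) = (τ : ℂ) / (Real.sqrt τ.im : ℂ)) :
    ‖w‖ = ‖w'‖ := by
  have same_area := (areaForm_normalizedBasis τ).trans (areaForm_normalizedBasis τ').symm
  have map_basis : ∀ i, w (normalizedBasis τ i) = normalizedBasis τ' i :=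
    Fin.forall_fin_two.2 ⟨by simpa using h1, by simpa using h2⟩
  have map_basis' : ∀ i, w' (normalizedBasis τ' i) = normalizedBasis τ i :=
    Fin.forall_fin_two.2 ⟨by simpa using h1', by simpa using h2'⟩
  exact norm_eq_norm_of_basis_of_areaForm_eq _ _ same_area map_basis map_basis'
end

section
/- Let c, d ∈ ℝ with d ≠ 0, and let φ : ℂ → ℂ be the ℝ-linear map given by φ(x + iy) = (x/d + c·y) + i·d·y for x, y ∈ ℝ. Then the operator norm (equivalently, the Lipschitz constant) of φ with respect to the complex absolute value equals √( (d² + d⁻² + c² + √((d² + d⁻² + c²)² − 4)) / 2 ). -/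
/-!
Every real-linear map `φ : ℂ → ℂ` has the form `φ z = α z + β conj z`. By the triangle inequality
`‖φ‖ ≤ ‖α‖ + ‖β‖`, and equality holds because some `z` on the unit circle gives `α z` and
`β conj z` the same argument. On the other hand `T := ‖φ 1‖² + ‖φ I‖² = 2 (‖α‖² + ‖β‖²)` and
`det φ = ‖α‖² - ‖β‖²`, so `T² - 4 (det φ)² = (4 ‖α‖ ‖β‖)²`, which yields
`‖φ‖² = (T + √(T² - 4 (det φ)²)) / 2`. The map of the theorem has determinant `1`.
-/

open Complex ComplexConjugate

section RealLinear

variable {α β : ℂ}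

theorem exists_apply_eq_smul_add_conj_smul {E : Type*} [AddCommGroup E] [Module ℂ E]
    (φ : ℂ →ₗ[ℝ] E) : ∃ a b : E, ∀ z, φ z = z • a + conj z • b := by
  refine ⟨(2⁻¹ : ℂ) • (φ 1 - I • φ I), (2⁻¹ : ℂ) • (φ 1 + I • φ I), fun z ↦ ?_⟩
  have hφ : φ z = (z.re : ℂ) • φ 1 + (z.im : ℂ) • φ I := by
    rw [coe_smul, coe_smul, ← map_smul, ← map_smul, ← map_add]
    simp
  have hre : (z.re : ℂ) = 2⁻¹ * (z + conj z) := by rw [re_eq_add_conj]; ring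
  have him : (z.im : ℂ) = 2⁻¹ * I * (conj z - z) := by
    rw [im_eq_sub_conj]
    field_simp
    linear_combination (z - conj z) * I_sq
  rw [hφ, hre, him]
  module

theorem exists_norm_eq_one_norm_mul_add_mul_conj (α β : ℂ) :
    ∃ u : ℂ, ‖u‖ = 1 ∧ ‖α * u + β * conj u‖ = ‖α‖ + ‖β‖ := by
  -- Rotating by half the difference of the arguments moves both terms to their mean argument.
  let u := exp (((arg β - arg α) / 2 : ℝ) * I)
  let v := exp (((arg α + arg β) / 2 : ℝ) * I)
  have hα : α * u = ‖α‖ * v := by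
    nth_rw 1 [← norm_mul_exp_arg_mul_I α]
    rw [mul_assoc, ← exp_add]
    congr 2
    push_cast
    ring
  have hβ : β * conj u = ‖β‖ * v := by
    nth_rw 1 [← norm_mul_exp_arg_mul_I β]
    rw [← exp_conj, mul_assoc, ← exp_add, map_mul, conj_ofReal, conj_I]
    congr 2
    push_cast
    ring
  refine ⟨u, norm_exp_ofReal_mul_I _, ?_⟩
  rw [hα, hβ, ← add_mul, norm_mul, norm_exp_ofReal_mul_I, mul_one, ← ofReal_add,
    Complex.norm_of_nonneg (by positivity)]

theorem opNorm_eq_norm_add_norm_of_apply_eq {φ : ℂ →L[ℝ] ℂ}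
    (hφ : ∀ z, φ z = α * z + β * conj z) : ‖φ‖ = ‖α‖ + ‖β‖ := by
  refine le_antisymm (φ.opNorm_le_bound (by positivity) fun z ↦ ?_) ?_
  · calc ‖φ z‖ ≤ ‖α * z‖ + ‖β * conj z‖ := hφ z ▸ norm_add_le _ _
      _ = (‖α‖ + ‖β‖) * ‖z‖ := by rw [norm_mul, norm_mul, norm_conj, add_mul]
  · obtain ⟨u, hu, hnorm⟩ := exists_norm_eq_one_norm_mul_add_mul_conj α β
    rw [← hnorm, ← hφ]
    exact φ.unit_le_opNorm u hu.le

theorem norm_sq_apply_one_add_norm_sq_apply_I_of_apply_eq {f : ℂ → ℂ}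
    (hf : ∀ z, f z = α * z + β * conj z) :
    ‖f 1‖ ^ 2 + ‖f I‖ ^ 2 = 2 * (‖α‖ ^ 2 + ‖β‖ ^ 2) := by
  have hI : f I = (α - β) * I := by rw [hf, conj_I]; ring
  rw [hf 1, hI, map_one, mul_one, mul_one, norm_mul, norm_I, mul_one]
  simpa only [sq] using parallelogram_law_with_norm_mul ℝ α β

theorem det_eq_re_mul_im_sub_re_mul_im (φ : ℂ →ₗ[ℝ] ℂ) :
    φ.det = (φ 1).re * (φ I).im - (φ I).re * (φ 1).im := by
  rw [← LinearMap.det_toMatrix basisOneI, Matrix.det_fin_two]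
  simp [LinearMap.toMatrix_apply]

theorem det_eq_norm_sq_sub_norm_sq_of_apply_eq {φ : ℂ →ₗ[ℝ] ℂ}
    (hφ : ∀ z, φ z = α * z + β * conj z) : φ.det = ‖α‖ ^ 2 - ‖β‖ ^ 2 := by
  rw [det_eq_re_mul_im_sub_re_mul_im, hφ, hφ, Complex.sq_norm, Complex.sq_norm, normSq_apply,
    normSq_apply]
  simp only [map_one, conj_I, mul_one, add_re, add_im, mul_re, mul_im, neg_re, neg_im, I_re, I_im]
  ring

theorem opNorm_eq_sqrt_norm_sq_add_sqrt_sub_det_sq (φ : ℂ →L[ℝ] ℂ) :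
    ‖φ‖ = √((‖φ 1‖ ^ 2 + ‖φ I‖ ^ 2 +
      √((‖φ 1‖ ^ 2 + ‖φ I‖ ^ 2) ^ 2 - 4 * φ.det ^ 2)) / 2) := by
  obtain ⟨α, β, h⟩ := exists_apply_eq_smul_add_conj_smul (φ : ℂ →ₗ[ℝ] ℂ)
  have hφ (z : ℂ) : φ z = α * z + β * conj z := by
    simpa only [smul_eq_mul, mul_comm, ContinuousLinearMap.coe_coe] using h z
  have hT : ‖φ 1‖ ^ 2 + ‖φ I‖ ^ 2 = 2 * (‖α‖ ^ 2 + ‖β‖ ^ 2) :=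
    norm_sq_apply_one_add_norm_sq_apply_I_of_apply_eq hφ
  have hdet : φ.det = ‖α‖ ^ 2 - ‖β‖ ^ 2 := det_eq_norm_sq_sub_norm_sq_of_apply_eq (φ := φ) hφ
  have hdisc : √((‖φ 1‖ ^ 2 + ‖φ I‖ ^ 2) ^ 2 - 4 * φ.det ^ 2) = 4 * ‖α‖ * ‖β‖ := by
    rw [hT, hdet, ← Real.sqrt_sq (show 0 ≤ 4 * ‖α‖ * ‖β‖ by positivity)]
    ring_nf
  rw [hdisc, hT, opNorm_eq_norm_add_norm_of_apply_eq hφ,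
    ← Real.sqrt_sq (show 0 ≤ ‖α‖ + ‖β‖ by positivity)]
  ring_nf

end RealLinear

/-- The Lipschitz constant (operator norm) of the ℝ-linear map
`x + iy ↦ (x/d + c·y) + i·d·y` is
`√((d² + d⁻² + c² + √((d² + d⁻² + c²)² − 4))/2)`. -/
theorem stmt_2 (c d : ℝ) (hd : d ≠ 0) (φ : ℂ →L[ℝ] ℂ)
    (hφ : ∀ x y : ℝ, φ (x + y * Complex.I) = (x / d + c * y) + d * y * Complex.I) :
    ‖φ‖ = Real.sqrt ((d ^ 2 + d⁻¹ ^ 2 + c ^ 2 +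
      Real.sqrt ((d ^ 2 + d⁻¹ ^ 2 + c ^ 2) ^ 2 - 4)) / 2) := by
  have h_one : φ 1 = (d⁻¹ : ℝ) := by simpa using hφ 1 0
  have h_I : φ I = c + d * I := by simpa using hφ 0 1
  have h_norms : ‖φ 1‖ ^ 2 + ‖φ I‖ ^ 2 = d ^ 2 + d⁻¹ ^ 2 + c ^ 2 := by
    rw [h_one, h_I, Complex.sq_norm, Complex.sq_norm, normSq_ofReal, normSq_add_mul_I]
    ring
  have h_det : φ.det = 1 := by
    rw [ContinuousLinearMap.det, det_eq_re_mul_im_sub_re_mul_im,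
      ContinuousLinearMap.coe_coe, h_one, h_I]
    simp [hd]
  rw [opNorm_eq_sqrt_norm_sq_add_sqrt_sub_det_sq, h_norms, h_det, one_pow, mul_one]
end

section
/- Let ω₁, ω₂ ∈ ℂ be linearly independent over ℝ, let ζ₁, ζ₂ ∈ ℂ, and let w : ℂ → ℂ be the unique ℝ-linear map with w(ω₁) = ζ₁ and w(ω₂) = ζ₂. Suppose g : ℂ → ℂ satisfies g(0) = 0 and g(z + m·ω₁ + n·ω₂) = g(z) + m·ζ₁ + n·ζ₂ for all z ∈ ℂ and all integers m, n, and suppose g is Lipschitz with constant K ≥ 0. Then w is Lipschitz with constant K, i.e. ‖w‖ ≤ K. (Thus the lattice-equivariant linear map realizes the minimal Lipschitz constant among all lattice-equivariant maps.) -/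
/-!
A lattice vector `v` satisfies `w v = g v - g 0`, so `‖w v‖ ≤ K * ‖v‖`. This bound is invariant
under real scaling of `v` and closed in `v`, and the real multiples of lattice vectors are dense:
rounding the coordinates of `t • x` moves it by a bounded amount, which is negligible compared
with `t` as `t → ∞`.
-/

open Set Submodule
open scoped NNReal

theorem map_add_of_mem_addSubgroupClosure {A B : Type*} [AddGroup A] [AddGroup B]
    {S : Set A} {g : A → B} {w : A →+ B} (hg : ∀ v ∈ S, ∀ x, g (x + v) = g x + w v)
    {v : A} (hv : v ∈ AddSubgroup.closure S) (x : A) : g (x + v) = g x + w v := by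
  induction hv using AddSubgroup.closure_induction generalizing x with
  | mem v hv => exact hg v hv x
  | zero => simp
  | add u v _ _ hu hv => rw [← add_assoc, hv, hu, map_add, add_assoc]
  | neg v _ hv => rw [map_neg, eq_add_neg_iff_add_eq, ← hv, neg_add_cancel_right]

section RealSpan

variable {E : Type*} [SeminormedAddCommGroup E] [NormedSpace ℝ E] {Λ : AddSubgroup E} {x : E}

theorem exists_forall_exists_norm_smul_sub_le_of_mem_span (hx : x ∈ span ℝ (Λ : Set E)) :
    ∃ C : ℝ, ∀ t : ℝ, ∃ v ∈ Λ, ‖t • x - v‖ ≤ C := by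
  induction hx using span_induction with
  | mem x hx =>
    refine ⟨‖x‖, fun t => ⟨⌊t⌋ • x, Λ.zsmul_mem hx _, ?_⟩⟩
    calc ‖t • x - ⌊t⌋ • x‖ = Int.fract t * ‖x‖ := by
          rw [← Int.cast_smul_eq_zsmul ℝ, ← sub_smul, Int.self_sub_floor, norm_smul,
            Real.norm_of_nonneg (Int.fract_nonneg t)]
      _ ≤ ‖x‖ := mul_le_of_le_one_left (norm_nonneg x) (Int.fract_lt_one t).le
  | zero => exact ⟨0, fun t => ⟨0, Λ.zero_mem, by simp⟩⟩
  | add x y _ _ hx hy =>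
    obtain ⟨C, hC⟩ := hx
    obtain ⟨D, hD⟩ := hy
    refine ⟨C + D, fun t => ?_⟩
    obtain ⟨u, hu, hux⟩ := hC t
    obtain ⟨v, hv, hvy⟩ := hD t
    refine ⟨u + v, Λ.add_mem hu hv, ?_⟩
    rw [smul_add, add_sub_add_comm]
    exact norm_add_le_of_le hux hvy
  | smul a x _ hx =>
    obtain ⟨C, hC⟩ := hx
    exact ⟨C, fun t => by simpa only [smul_smul] using hC (t * a)⟩

theorem mem_closure_smul_of_mem_span (hx : x ∈ span ℝ (Λ : Set E)) :
    x ∈ closure {y | ∃ c : ℝ, ∃ v ∈ Λ, c • v = y} := by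
  obtain ⟨C, hC⟩ := exists_forall_exists_norm_smul_sub_le_of_mem_span hx
  refine Metric.mem_closure_iff.2 fun ε hε => ?_
  obtain ⟨t, ht⟩ := exists_gt (max 0 (C / ε))
  obtain ⟨ht₀, htC⟩ := max_lt_iff.1 ht
  obtain ⟨v, hv, hvx⟩ := hC t
  refine ⟨t⁻¹ • v, ⟨t⁻¹, v, hv, rfl⟩, ?_⟩
  calc dist x (t⁻¹ • v) = t⁻¹ * ‖t • x - v‖ := by
        rw [dist_eq_norm, ← norm_smul_of_nonneg (inv_nonneg.2 ht₀.le), smul_sub,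
          inv_smul_smul₀ ht₀.ne']
    _ ≤ t⁻¹ * C := by gcongr
    _ < ε := by rwa [inv_mul_lt_iff₀ ht₀, ← div_lt_iff₀ hε]

theorem dense_smul_of_dense_span (hΛ : Dense (span ℝ (Λ : Set E) : Set E)) :
    Dense {y | ∃ c : ℝ, ∃ v ∈ Λ, c • v = y} :=
  dense_closure.1 (hΛ.mono fun _ => mem_closure_smul_of_mem_span)

theorem opNorm_le_of_dense_span {F : Type*} [SeminormedAddCommGroup F] [NormedSpace ℝ F]
    (hΛ : Dense (span ℝ (Λ : Set E) : Set E)) {w : E →L[ℝ] F} {K : ℝ} (hK : 0 ≤ K)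
    (hw : ∀ v ∈ Λ, ‖w v‖ ≤ K * ‖v‖) : ‖w‖ ≤ K := by
  refine w.opNorm_le_bound hK fun x => ?_
  refine (dense_smul_of_dense_span hΛ).induction (P := fun y => ‖w y‖ ≤ K * ‖y‖) ?_
    (isClosed_le (by fun_prop) (by fun_prop)) x
  rintro _ ⟨c, v, hv, rfl⟩
  calc ‖w (c • v)‖ = ‖c‖ * ‖w v‖ := by rw [map_smul, norm_smul]
    _ ≤ ‖c‖ * (K * ‖v‖) := by gcongr; exact hw v hv
    _ = K * ‖c • v‖ := by rw [norm_smul, mul_left_comm]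

end RealSpan

theorem stmt_3_general {E F : Type*} [SeminormedAddCommGroup E] [NormedSpace ℝ E]
    [SeminormedAddCommGroup F] [NormedSpace ℝ F] {S : Set E}
    (hS : Dense (span ℝ S : Set E)) {w : E →L[ℝ] F} {g : E → F}
    (hg : ∀ v ∈ S, ∀ x, g (x + v) = g x + w v) {K : ℝ≥0} (hLip : LipschitzWith K g) :
    ‖w‖ ≤ K := by
  have hΛ : Dense (span ℝ (AddSubgroup.closure S : Set E) : Set E) :=
    hS.mono (span_mono AddSubgroup.subset_closure)
  refine opNorm_le_of_dense_span hΛ K.coe_nonneg fun v hv => ?_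
  have hgv : g v = g 0 + w v := by
    simpa using map_add_of_mem_addSubgroupClosure (w := (w : E →+ F)) hg hv 0
  simpa [dist_eq_norm, hgv] using hLip.dist_le_mul v 0

/-- The lattice-equivariant ℝ-linear map `w` (with `w ωᵢ = ζᵢ`) has minimal Lipschitz
constant among all lattice-equivariant maps: if `g` fixes `0`, is `K`-Lipschitz and
equivariant, then `‖w‖ ≤ K`. -/
theorem stmt_3 (ω₁ ω₂ ζ₁ ζ₂ : ℂ) (hindep : LinearIndependent ℝ ![ω₁, ω₂])
    (w : ℂ →L[ℝ] ℂ) (hw1 : w ω₁ = ζ₁) (hw2 : w ω₂ = ζ₂)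
    (g : ℂ → ℂ) (hg0 : g 0 = 0)
    (heq : ∀ (z : ℂ) (m n : ℤ), g (z + m * ω₁ + n * ω₂) = g z + m * ζ₁ + n * ζ₂)
    (K : ℝ) (hK : 0 ≤ K)
    (hLip : ∀ x y : ℂ, ‖g x - g y‖ ≤ K * ‖x - y‖) :
    ‖w‖ ≤ K := by
  have hspan : span ℝ (range ![ω₁, ω₂]) = ⊤ :=
    hindep.span_eq_top_of_card_eq_finrank (by simp)
  have hdense : Dense (span ℝ (range ![ω₁, ω₂]) : Set ℂ) := by
    rw [hspan, top_coe]
    exact dense_univ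
  have hperiods : ∀ v ∈ range ![ω₁, ω₂], ∀ z, g (z + v) = g z + w v :=
    forall_mem_range.2 <| Fin.forall_fin_two.2
      ⟨fun z => by simpa [hw1] using heq z 1 0, fun z => by simpa [hw2] using heq z 0 1⟩
  lift K to ℝ≥0 using hK
  exact stmt_3_general hdense hperiods
    (.of_dist_le_mul fun x y => by simpa only [dist_eq_norm] using hLip x y)
end

section
/- Let ω₁, ω₂ ∈ ℂ be linearly independent over ℝ, let ζ₁, ζ₂ ∈ ℂ, and let w : ℂ → ℂ be the unique ℝ-linear map with w(ω₁) = ζ₁ and w(ω₂) = ζ₂. Suppose g : ℂ → ℂ is continuous, g(0) = 0, and g(z + m·ω₁ + n·ω₂) = g(z) + m·ζ₁ + n·ζ₂ for all z ∈ ℂ and all integers m, n. Define gₖ(z) = g(k·z)/k for each positive integer k. Then the sequence (gₖ) converges uniformly on all of ℂ to w as k → ∞. -/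
/-!
The map `g - w` is periodic with respect to a lattice, hence factors through a compact torus and is
bounded. Since `w` is homogeneous, `t⁻¹ • g (t • x) - w x = t⁻¹ • (g - w) (t • x)`, which is
`O(|t|⁻¹)` uniformly in `x`.
-/

open Bornology Filter Function Set Submodule Topology

theorem periodic_of_mem_span_int {G β : Type*} [AddCommGroup G] {f : G → β} {S : Set G}
    (hf : ∀ v ∈ S, Periodic f v) {v : G} (hv : v ∈ span ℤ S) : Periodic f v := by
  induction hv using span_induction with
  | mem v hv => exact hf v hv
  | zero => exact fun x => by rw [add_zero]
  | add u v _ _ hu hv => exact hu.add_period hv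
  | smul n v _ hv => exact hv.zsmul n

theorem isCompact_range_of_periodic_of_span_eq_top {E β : Type*} [NormedAddCommGroup E]
    [NormedSpace ℝ E] [FiniteDimensional ℝ E] [TopologicalSpace β] {f : E → β} {S : Set E}
    (hf : Continuous f) (hS : span ℝ S = ⊤) (hper : ∀ v ∈ S, Periodic f v) :
    IsCompact (range f) := by
  let b := Module.Basis.ofSpan hS.ge
  have hbS : range b ⊆ S := Module.Basis.ofSpan_subset hS.ge
  have : Finite _ := Module.Finite.finite_basis b
  exact IsZLattice.isCompact_range_of_periodic (span ℤ (range b)) f hf fun x v hv =>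
    periodic_of_mem_span_int (fun u hu => hper u (hbS hu)) hv x

theorem tendstoUniformly_inv_smul_comp_smul {𝕜 E F : Type*} [NormedField 𝕜] [AddCommGroup E]
    [Module 𝕜 E] [SeminormedAddCommGroup F] [NormedSpace 𝕜 F] {g : E → F} {w : E →ₗ[𝕜] F}
    (hbdd : IsBounded (range fun x => g x - w x)) :
    TendstoUniformly (fun (t : 𝕜) x => t⁻¹ • g (t • x)) w (cobounded 𝕜) := by
  obtain ⟨C, hC⟩ := isBounded_iff_forall_norm_le.mp hbdd
  have hlim : Tendsto (fun t : 𝕜 => ‖t⁻¹‖ * C) (cobounded 𝕜) (𝓝 0) := by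
    simpa using (tendsto_inv₀_cobounded (α := 𝕜)).norm.mul_const C
  rw [Metric.tendstoUniformly_iff]
  intro ε hε
  filter_upwards [hlim.eventually_lt_const hε, eventually_ne_cobounded 0] with t htε ht x
  calc dist (w x) (t⁻¹ • g (t • x))
      = ‖t⁻¹ • (g (t • x) - w (t • x))‖ := by
        rw [dist_comm, dist_eq_norm, smul_sub, map_smul, inv_smul_smul₀ ht]
    _ = ‖t⁻¹‖ * ‖g (t • x) - w (t • x)‖ := norm_smul _ _
    _ ≤ ‖t⁻¹‖ * C := by gcongr; exact hC _ (mem_range_self (t • x))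
    _ < ε := htε

theorem stmt_4_general {E F : Type*} [NormedAddCommGroup E] [NormedSpace ℝ E]
    [FiniteDimensional ℝ E] [SeminormedAddCommGroup F] [NormedSpace ℝ F] {S : Set E}
    (hS : span ℝ S = ⊤) (w : E →ₗ[ℝ] F) {g : E → F} (hg : Continuous g)
    (heq : ∀ v ∈ S, ∀ x, g (x + v) = g x + w v) :
    TendstoUniformly (fun (t : ℝ) x => t⁻¹ • g (t • x)) w (cobounded ℝ) := by
  have hcont : Continuous fun x => g x - w x := hg.sub w.continuous_of_finiteDimensional
  have hper : ∀ v ∈ S, Periodic (fun x => g x - w x) v := fun v hv x => by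
    simp only [heq v hv, map_add, add_sub_add_right_eq_sub]
  exact tendstoUniformly_inv_smul_comp_smul
    (isCompact_range_of_periodic_of_span_eq_top hcont hS hper).isBounded

/-- If `g : ℂ → ℂ` is continuous, fixes `0` and is lattice-equivariant
(`g (z + mω₁ + nω₂) = g z + mζ₁ + nζ₂`), then the rescalings `z ↦ g (k z) / k`
converge uniformly on all of ℂ to the ℝ-linear map `w` with `w ωᵢ = ζᵢ`. -/
theorem stmt_4 (ω₁ ω₂ ζ₁ ζ₂ : ℂ) (hindep : LinearIndependent ℝ ![ω₁, ω₂])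
    (w : ℂ →L[ℝ] ℂ) (hw1 : w ω₁ = ζ₁) (hw2 : w ω₂ = ζ₂)
    (g : ℂ → ℂ) (hg : Continuous g) (hg0 : g 0 = 0)
    (heq : ∀ (z : ℂ) (m n : ℤ), g (z + m * ω₁ + n * ω₂) = g z + m * ζ₁ + n * ζ₂) :
    TendstoUniformly (fun (k : ℕ) (z : ℂ) => g (k * z) / k) (fun z => w z)
      Filter.atTop := by
  have hspan : span ℝ (range ![ω₁, ω₂]) = ⊤ :=
    hindep.span_eq_top_of_card_eq_finrank' (by simp [Complex.finrank_real_complex])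
  have hequiv : ∀ v ∈ range ![ω₁, ω₂], ∀ z, g (z + v) = g z + w v := by
    rw [forall_mem_range, Fin.forall_fin_two]
    exact ⟨fun z => by simpa [hw1] using heq z 1 0, fun z => by simpa [hw2] using heq z 0 1⟩
  intro u hu
  simpa [div_eq_inv_mul] using
    tendsto_natCast_atTop_cobounded.eventually (stmt_4_general hspan w.toLinearMap hg hequiv u hu)
end

section
/- For every real r > 1, the set of functions F : ℝ² → ℝ² satisfying (i) F(0) = 0, (ii) F(v + (m, n)) = F(v) + (r·m, n/r) for all v ∈ ℝ² and all integers m, n, and (iii) F is Lipschitz with constant r (with respect to the Euclidean norm), is infinite. (That is, there are infinitely many distinct marking-respecting maps between the square torus ℝ²/ℤ² and the rectangular torus ℝ²/(rℤ × (1/r)ℤ), all realizing the extremal Lipschitz constant r.) -/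
/-! The affine map `(x, y) ↦ (r x, y / r)` stretches only the first coordinate by the extremal
factor `r`; the second is contracted, because `1 / r < r`. The slack lets us perturb the second
coordinate by a periodic function `t sin (2 π y)` with `2 π |t| ≤ r - 1 / r`, without raising the
Lipschitz constant. The same perturbation works for a diagonal map in any dimension as soon as one
of its factors is not extremal. -/

open scoped NNReal

section CoordinatewiseMaps

variable {ι : Type*} {α β : ι → Type*} (p : ENNReal)

theorem lipschitzWith_withLpMap_piMap [Fintype ι] [Fact (1 ≤ p)]
    [∀ i, PseudoEMetricSpace (α i)] [∀ i, PseudoEMetricSpace (β i)]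
    {K : ℝ≥0} {f : ∀ i, α i → β i} (hf : ∀ i, LipschitzWith K (f i)) :
    LipschitzWith K (WithLp.map p (Pi.map f) : PiLp p α → PiLp p β) := by
  intro x y
  rcases p.dichotomy with rfl | hp
  · simp only [PiLp.edist_eq_iSup, ENNReal.mul_iSup]
    exact iSup_mono fun i => hf i (x i) (y i)
  · have hp_pos : 0 < p.toReal := zero_lt_one.trans_le hp
    simp only [PiLp.edist_eq_sum hp_pos]
    calc (∑ i, edist (f i (x i)) (f i (y i)) ^ p.toReal) ^ (1 / p.toReal)
        ≤ (∑ i, (K * edist (x i) (y i)) ^ p.toReal) ^ (1 / p.toReal) := by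
          gcongr with i
          exact hf i (x i) (y i)
      _ = K * (∑ i, edist (x i) (y i) ^ p.toReal) ^ (1 / p.toReal) := by
          simp only [ENNReal.mul_rpow_of_nonneg _ _ hp_pos.le, ← Finset.mul_sum]
          rw [ENNReal.mul_rpow_of_nonneg _ _ (by positivity), one_div,
            ENNReal.rpow_rpow_inv hp_pos.ne']

theorem injective_withLpMap_piMap [∀ i, Nonempty (α i)] :
    Function.Injective fun f : ∀ i, α i → β i =>
      (WithLp.map p (Pi.map f) : PiLp p α → PiLp p β) := by
  classical
  intro f g hfg
  funext i x
  let v : ∀ j, α j := Function.update (fun _ => Classical.arbitrary _) i x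
  have hv : f i (v i) = g i (v i) := congrArg (fun w : PiLp p β => w i) (congrFun hfg (.toLp p v))
  simpa only [v, Function.update_self] using hv

end CoordinatewiseMaps

section LinearAddSine

/-- The linear map `x ↦ a x` perturbed by a sine of amplitude `t`. The sine has period `1`, so that
the map descends to `ℝ / ℤ → ℝ / aℤ` and induces the same map of fundamental groups as `x ↦ a x`. -/
noncomputable def linearAddSine (a t x : ℝ) : ℝ :=
  a * x + t * Real.sin (2 * Real.pi * x)

theorem linearAddSine_zero (a t : ℝ) : linearAddSine a t 0 = 0 := by
  simp [linearAddSine]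

theorem linearAddSine_add_intCast (a t x : ℝ) (n : ℤ) :
    linearAddSine a t (x + n) = linearAddSine a t x + a * n := by
  have h_periodic : Real.sin (2 * Real.pi * (x + n)) = Real.sin (2 * Real.pi * x) := by
    rw [← Real.sin_add_int_mul_two_pi (2 * Real.pi * x) n]
    ring_nf
  rw [linearAddSine, linearAddSine, h_periodic]
  ring

theorem lipschitzWith_linearAddSine {a t : ℝ} {K : ℝ≥0} (h : |a| + 2 * Real.pi * |t| ≤ K) :
    LipschitzWith K (linearAddSine a t) := by
  refine LipschitzWith.of_dist_le_mul fun x y => ?_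
  rw [Real.dist_eq, Real.dist_eq]
  calc |linearAddSine a t x - linearAddSine a t y|
      = |a * (x - y) + t * (Real.sin (2 * Real.pi * x) - Real.sin (2 * Real.pi * y))| := by
        rw [linearAddSine, linearAddSine]
        ring_nf
    _ ≤ |a| * |x - y| + |t| * |2 * Real.pi * x - 2 * Real.pi * y| := by
        grw [abs_add_le, abs_mul, abs_mul, Real.abs_sin_sub_sin_le]
    _ = (|a| + 2 * Real.pi * |t|) * |x - y| := by
        rw [← mul_sub, abs_mul, abs_of_pos Real.two_pi_pos]
        ring
    _ ≤ K * |x - y| := by gcongr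

theorem linearAddSine_injective (a : ℝ) : Function.Injective (linearAddSine a) := by
  intro s t hst
  have h_peak (u : ℝ) : linearAddSine a u (1 / 4) = a / 4 + u := by
    rw [linearAddSine, show 2 * Real.pi * (1 / 4) = Real.pi / 2 by ring, Real.sin_pi_div_two]
    ring
  have h_quarter : a / 4 + s = a / 4 + t := by rw [← h_peak, ← h_peak, hst]
  exact add_left_cancel h_quarter

end LinearAddSine

section DiagonalAddSine

variable {ι : Type*} (p : ENNReal) (a t : ι → ℝ)

/-- The diagonal map `diag a` with its `i`-th coordinate perturbed by a sine of amplitude `t i`: a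
lift of a map from `ℝ^ι / ℤ^ι` to `ℝ^ι / ∏ i, (a i)ℤ` in the homotopy class of `diag a`. -/
noncomputable def diagonalAddSine : PiLp p (fun _ : ι => ℝ) → PiLp p (fun _ : ι => ℝ) :=
  WithLp.map p (Pi.map fun i => linearAddSine (a i) (t i))

theorem diagonalAddSine_zero : diagonalAddSine p a t 0 = 0 := by
  ext i
  exact linearAddSine_zero (a i) (t i)

theorem diagonalAddSine_add_intCast (v : PiLp p fun _ : ι => ℝ) (n : ι → ℤ) :
    diagonalAddSine p a t (v + .toLp p fun i => (n i : ℝ)) =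
      diagonalAddSine p a t v + .toLp p fun i => a i * n i := by
  ext i
  exact linearAddSine_add_intCast (a i) (t i) (v i) (n i)

theorem diagonalAddSine_injective : Function.Injective (diagonalAddSine p a) := by
  intro s t hst
  funext i
  exact linearAddSine_injective (a i) (congrFun (injective_withLpMap_piMap p hst) i)

variable {a t} in
theorem lipschitzWith_diagonalAddSine [Fintype ι] [Fact (1 ≤ p)] {K : ℝ≥0}
    (h : ∀ i, |a i| + 2 * Real.pi * |t i| ≤ K) : LipschitzWith K (diagonalAddSine p a t) :=
  lipschitzWith_withLpMap_piMap p fun i => lipschitzWith_linearAddSine (h i)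

end DiagonalAddSine

theorem stmt_5_general {ι : Type*} [Fintype ι] (p : ENNReal) [Fact (1 ≤ p)] {a : ι → ℝ} {K : ℝ≥0}
    (ha : ∀ i, |a i| ≤ K) {i : ι} (hi : |a i| < K) :
    Set.Infinite {F : PiLp p (fun _ : ι => ℝ) → PiLp p (fun _ : ι => ℝ) |
      F 0 = 0 ∧
      (∀ (v : PiLp p fun _ : ι => ℝ) (n : ι → ℤ),
        F (v + .toLp p fun i => (n i : ℝ)) = F v + .toLp p fun i => a i * n i) ∧
      LipschitzWith K F} := by
  classical
  have h_slack : 0 < (K - |a i|) / (2 * Real.pi) := div_pos (sub_pos.2 hi) Real.two_pi_pos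
  refine Set.infinite_of_injOn_mapsTo (f := fun s => diagonalAddSine p a (Pi.single i s))
    ((diagonalAddSine_injective p a).comp (Pi.single_injective i)).injOn ?_
    (Set.Icc_infinite h_slack)
  rintro s ⟨hs_nonneg, hs_le⟩
  refine ⟨diagonalAddSine_zero p a _, diagonalAddSine_add_intCast p a _,
    lipschitzWith_diagonalAddSine p fun j => ?_⟩
  rcases eq_or_ne j i with rfl | hj
  · rw [Pi.single_eq_same, abs_of_nonneg hs_nonneg]
    linarith [(le_div_iff₀' Real.two_pi_pos).1 hs_le]
  · simpa only [Pi.single_eq_of_ne hj, abs_zero, mul_zero, add_zero] using ha j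

/-- There are infinitely many marking-respecting maps between the square torus and the
rectangular torus `ℝ²/(rℤ × (1/r)ℤ)` realizing the extremal Lipschitz constant `r`. -/
theorem stmt_5 (r : ℝ) (hr : 1 < r) :
    Set.Infinite {F : EuclideanSpace ℝ (Fin 2) → EuclideanSpace ℝ (Fin 2) |
      F 0 = 0 ∧
      (∀ (v : EuclideanSpace ℝ (Fin 2)) (m n : ℤ),
        F (v + (WithLp.equiv 2 (Fin 2 → ℝ)).symm ![(m : ℝ), (n : ℝ)]) =
          F v + (WithLp.equiv 2 (Fin 2 → ℝ)).symm ![r * m, n / r]) ∧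
      (∀ u v : EuclideanSpace ℝ (Fin 2), ‖F u - F v‖ ≤ r * ‖u - v‖)} := by
  lift r to ℝ≥0 using zero_le_one.trans hr.le
  have h_contract : |(r : ℝ)⁻¹| < r := by
    rw [abs_of_nonneg (by positivity)]
    exact (inv_lt_one_of_one_lt₀ hr).trans hr
  have h_stretch : ∀ i, |![(r : ℝ), (r : ℝ)⁻¹] i| ≤ r :=
    Fin.forall_fin_two.2 ⟨(abs_of_nonneg r.coe_nonneg).le, h_contract.le⟩
  refine (stmt_5_general 2 h_stretch (i := 1) h_contract).mono ?_
  rintro F ⟨h_zero, h_equivariant, h_lipschitz⟩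
  refine ⟨h_zero, fun v m n => ?_, h_lipschitz.norm_sub_le⟩
  convert h_equivariant v ![m, n] using 3 <;> ext i <;> fin_cases i <;> simp [div_eq_inv_mul]
end

section
/- Let r > 1, let ε ∈ (−1/2, 1/2), and let δ ∈ ℝ satisfy max(0, 1/r − r/2 + ε·r) < δ < min(1/r, r/2 + ε·r). Define F : ℝ² → ℝ² by F(x, y) = (r·x, ((1/r − δ)/(1/2 − ε))·y) if y ≤ 1/2 − ε, and F(x, y) = (r·x, (1/r − δ) + (δ/(1/2 + ε))·(y − (1/2 − ε))) if y ≥ 1/2 − ε. Then F is well-defined (the two formulas agree when y = 1/2 − ε) and F is Lipschitz with constant r with respect to the Euclidean norm on ℝ². -/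
/-!
The map acts separately on the two coordinates: `x ↦ r x`, and a piecewise-affine function of `y`
whose slopes `(1/r - δ)/(1/2 - ε)` and `δ/(1/2 + ε)` lie in `(0, r)`, which is exactly what the
bounds on `δ` say. Inserting the break point `1/2 - ε` between two heights on different sides of it
shows that the function of `y` is `r`-Lipschitz, and a map whose coordinate functions are all
`r`-Lipschitz is `r`-Lipschitz for the Euclidean norm.
-/

open Set
open scoped NNReal ENNReal

theorem lipschitzOnWith_union {X E : Type*} [PseudoEMetricSpace X] [PseudoEMetricSpace E]
    {K : ℝ≥0} {f : X → E} {s t : Set X} (hs : LipschitzOnWith K f s) (ht : LipschitzOnWith K f t)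
    (hst : ∀ x ∈ s, ∀ y ∈ t, ∃ z ∈ s ∩ t, edist x z + edist z y ≤ edist x y) :
    LipschitzOnWith K f (s ∪ t) := by
  have across : ∀ x ∈ s, ∀ y ∈ t, edist (f x) (f y) ≤ K * edist x y := by
    intro x hx y hy
    obtain ⟨z, ⟨hzs, hzt⟩, hz⟩ := hst x hx y hy
    calc edist (f x) (f y) ≤ edist (f x) (f z) + edist (f z) (f y) := edist_triangle _ _ _
      _ ≤ K * edist x z + K * edist z y := add_le_add (hs hx hzs) (ht hzt hy)
      _ = K * (edist x z + edist z y) := (mul_add _ _ _).symm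
      _ ≤ K * edist x y := by gcongr
  rintro x (hx | hx) y (hy | hy)
  · exact hs hx hy
  · exact across x hx y hy
  · rw [edist_comm, edist_comm x]
    exact across y hy x hx
  · exact ht hx hy

theorem lipschitzWith_of_Iic_of_Ici {E : Type*} [PseudoEMetricSpace E] {K : ℝ≥0} {f : ℝ → E}
    {c : ℝ} (hIic : LipschitzOnWith K f (Iic c)) (hIci : LipschitzOnWith K f (Ici c)) :
    LipschitzWith K f := by
  rw [← lipschitzOnWith_univ, ← Iic_union_Ici (a := c)]
  refine lipschitzOnWith_union hIic hIci fun x hx y hy ↦ ⟨c, ⟨self_mem_Iic, self_mem_Ici⟩, ?_⟩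
  have hc : dist x c + dist c y = dist x y :=
    dist_add_dist_of_mem_segment (Icc_subset_segment ⟨hx, hy⟩)
  rw [edist_dist, edist_dist, edist_dist, ← ENNReal.ofReal_add dist_nonneg dist_nonneg, hc]

theorem lipschitzWith_ite_le {E : Type*} [PseudoEMetricSpace E] {K : ℝ≥0} {f g : ℝ → E} {c : ℝ}
    (hf : LipschitzOnWith K f (Iic c)) (hg : LipschitzOnWith K g (Ici c)) (hfg : f c = g c) :
    LipschitzWith K fun y ↦ if y ≤ c then f y else g y := by
  have eq_right : ∀ y, c ≤ y → (if y ≤ c then f y else g y) = g y := by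
    intro y hy
    rcases hy.eq_or_lt with rfl | hlt
    · exact (if_pos le_rfl).trans hfg
    · exact if_neg hlt.not_ge
  refine lipschitzWith_of_Iic_of_Ici (c := c) (fun x hx y hy ↦ ?_) fun x hx y hy ↦ ?_
  · rw [if_pos (mem_Iic.1 hx), if_pos (mem_Iic.1 hy)]
    exact hf hx hy
  · rw [eq_right x hx, eq_right y hy]
    exact hg hx hy

theorem lipschitzWith_const_add_mul_sub {R : Type*} [NonUnitalSeminormedRing R] (d b c : R) :
    LipschitzWith ‖b‖₊ fun y ↦ d + b * (y - c) := by
  refine LipschitzWith.of_dist_le_mul fun y z ↦ ?_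
  rw [dist_add_left, dist_eq_norm, ← mul_sub, sub_sub_sub_cancel_right, dist_eq_norm, coe_nnnorm]
  exact norm_mul_le _ _

theorem lipschitzWith_withLp_map_piMap {ι : Type*} [Fintype ι] {α β : ι → Type*}
    [∀ i, PseudoEMetricSpace (α i)] [∀ i, PseudoEMetricSpace (β i)] (p : ℝ≥0∞) [Fact (1 ≤ p)]
    {K : ℝ≥0} {f : ∀ i, α i → β i} (hf : ∀ i, LipschitzWith K (f i)) :
    LipschitzWith K (WithLp.map p (Pi.map f) : PiLp p α → PiLp p β) := by
  intro u v
  rcases eq_or_ne p ∞ with rfl | hp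
  · simp only [PiLp.edist_eq_iSup, ENNReal.mul_iSup]
    exact iSup_mono fun i ↦ hf i (u i) (v i)
  have hp₀ : 0 < p.toReal := ENNReal.toReal_pos (zero_lt_one.trans_le Fact.out).ne' hp
  simp only [PiLp.edist_eq_sum hp₀]
  calc (∑ i, edist (f i (u i)) (f i (v i)) ^ p.toReal) ^ (1 / p.toReal)
      ≤ (∑ i, (K * edist (u i) (v i)) ^ p.toReal) ^ (1 / p.toReal) := by
        gcongr with i
        exact hf i (u i) (v i)
    _ = K * (∑ i, edist (u i) (v i) ^ p.toReal) ^ (1 / p.toReal) := by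
        simp only [ENNReal.mul_rpow_of_nonneg _ _ hp₀.le, ← Finset.mul_sum]
        rw [ENNReal.mul_rpow_of_nonneg _ _ (by positivity), one_div,
          ENNReal.rpow_rpow_inv hp₀.ne']

theorem lipschitzWith_of_apply_toLp_pair {α β : Type*} [PseudoEMetricSpace α]
    [PseudoEMetricSpace β] {p : ℝ≥0∞} [Fact (1 ≤ p)] {K : ℝ≥0} {φ ψ : α → β}
    {F : PiLp p (fun _ : Fin 2 ↦ α) → PiLp p (fun _ : Fin 2 ↦ β)}
    (hφ : LipschitzWith K φ) (hψ : LipschitzWith K ψ)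
    (hF : ∀ x y, F (WithLp.toLp p ![x, y]) = WithLp.toLp p ![φ x, ψ y]) : LipschitzWith K F := by
  have F_eq : F = WithLp.map p (Pi.map ![φ, ψ]) := by
    ext u i
    have hu : u = WithLp.toLp p ![u 0, u 1] := by ext j; fin_cases j <;> rfl
    rw [hu, hF]
    fin_cases i <;> rfl
  rw [F_eq]
  exact lipschitzWith_withLp_map_piMap p (Fin.forall_fin_two.2 ⟨hφ, hψ⟩)

theorem nnnorm_div_le_of_le_mul {K : ℝ≥0} {t w : ℝ} (ht : 0 ≤ t) (hw : 0 ≤ w) (h : t ≤ K * w) :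
    ‖t / w‖₊ ≤ K := by
  rw [← NNReal.coe_le_coe, coe_nnnorm, Real.norm_of_nonneg (div_nonneg ht hw)]
  exact div_le_of_le_mul₀ hw K.coe_nonneg h

/-- The paper's piecewise-linear non-affine map from the square torus to the rectangular
torus: it is well defined (the two formulas agree at `y = 1/2 - ε`) and is Lipschitz with
the extremal constant `r`. -/
theorem stmt_6 (r ε δ : ℝ) (hr : 1 < r) (hε : -(1/2) < ε) (hε' : ε < 1/2)
    (hδ1 : max 0 (1/r - r/2 + ε * r) < δ) (hδ2 : δ < min (1/r) (r/2 + ε * r))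
    (F : EuclideanSpace ℝ (Fin 2) → EuclideanSpace ℝ (Fin 2))
    (hF : ∀ x y : ℝ,
      F ((WithLp.equiv 2 (Fin 2 → ℝ)).symm ![x, y]) =
        if y ≤ 1/2 - ε then
          (WithLp.equiv 2 (Fin 2 → ℝ)).symm ![r * x, ((1/r - δ) / (1/2 - ε)) * y]
        else
          (WithLp.equiv 2 (Fin 2 → ℝ)).symm
            ![r * x, (1/r - δ) + (δ / (1/2 + ε)) * (y - (1/2 - ε))]) :
    ((1/r - δ) / (1/2 - ε)) * (1/2 - ε)
        = (1/r - δ) + (δ / (1/2 + ε)) * ((1/2 - ε) - (1/2 - ε)) ∧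
      ∀ u v : EuclideanSpace ℝ (Fin 2), ‖F u - F v‖ ≤ r * ‖u - v‖ := by
  have lower_pos : 0 < 1/2 - ε := by linarith
  have upper_pos : 0 < 1/2 + ε := by linarith
  obtain ⟨δ_pos, lower_lt⟩ := max_lt_iff.1 hδ1
  obtain ⟨δ_lt, upper_lt⟩ := lt_min_iff.1 hδ2
  have agree : ((1/r - δ) / (1/2 - ε)) * (1/2 - ε)
      = (1/r - δ) + (δ / (1/2 + ε)) * ((1/2 - ε) - (1/2 - ε)) := by
    rw [div_mul_cancel₀ _ lower_pos.ne', sub_self, mul_zero, add_zero]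
  refine ⟨agree, ?_⟩
  lift r to ℝ≥0 using by linarith
  have lower_slope : ‖(1/r - δ) / (1/2 - ε)‖₊ ≤ r :=
    nnnorm_div_le_of_le_mul (by linarith) lower_pos.le (by linarith)
  have upper_slope : ‖δ / (1/2 + ε)‖₊ ≤ r :=
    nnnorm_div_le_of_le_mul δ_pos.le upper_pos.le (by linarith)
  have lipschitz_fst : LipschitzWith r fun x : ℝ ↦ r * x :=
    (lipschitzWith_smul (r : ℝ)).weaken r.nnnorm_eq.le
  have lipschitz_snd := lipschitzWith_ite_le
    ((lipschitzWith_smul ((1/r - δ) / (1/2 - ε))).weaken lower_slope).lipschitzOnWith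
    ((lipschitzWith_const_add_mul_sub _ _ _).weaken upper_slope).lipschitzOnWith agree
  exact (lipschitzWith_of_apply_toLp_pair lipschitz_fst lipschitz_snd fun x y ↦
    (hF x y).trans (by split_ifs <;> rfl)).norm_sub_le
end

section
/- Let ω₁, ω₂ ∈ ℂ be linearly independent over ℝ with |Im(conj(ω₁)·ω₂)| = 1, and let ζ₁, ζ₂ ∈ ℂ be linearly independent over ℝ with |Im(conj(ζ₁)·ζ₂)| = 1 (i.e., both fundamental parallelograms have area 1). Suppose g : ℂ → ℂ is surjective, satisfies g(z + m·ω₁ + n·ω₂) = g(z) + m·ζ₁ + n·ζ₂ for all z ∈ ℂ and all integers m, n, and is Lipschitz with constant 1. Then g is an isometry: |g(x) − g(y)| = |x − y| for all x, y ∈ ℂ. -/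
/-!
The marking `ωᵢ ↦ ζᵢ` extends to a real-linear map `L`, and `g` agrees with `L` up to a constant on
the lattice `Λ` of the `ωᵢ`. Hence `L` is nonexpanding on `Λ` and, since every vector is within
bounded distance of `Λ`, nonexpanding everywhere (rescale). It does not shrink volume either, so it
is a linear isometry.

For fixed `x` and `y`, let `v` be the vector with `L v = (g x - g y) - L (x - y)`. Moving `x` by
`l ∈ Λ` does not change `v`, so nonexpansion gives `‖e + v‖ ≤ ‖e‖` for every `e ∈ x - y + Λ`. Some
such `e` lies within bounded distance of `n • v`. Since the norm is convex along the line through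
`e` in direction `v`, we get `‖e‖ ≤ ‖e - n • v‖`, so `n • v` stays bounded as `n → ∞` and `v = 0`.
-/

open Module MeasureTheory

theorem le_of_forall_nat_mul_le_mul_add {a b C : ℝ} (h : ∀ n : ℕ, n * a ≤ n * b + C) : a ≤ b := by
  by_contra! hba
  obtain ⟨n, hn⟩ := Archimedean.arch (C + 1) (sub_pos.2 hba)
  rw [nsmul_eq_mul] at hn
  linarith [h n]

theorem map_add_of_mem_span_int {E F : Type*} [AddCommGroup E] [AddCommGroup F] (f : E →+ F)
    {g : E → F} {S : Set E} (hg : ∀ z, ∀ s ∈ S, g (z + s) = g z + f s) {l : E}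
    (hl : l ∈ Submodule.span ℤ S) (z : E) : g (z + l) = g z + f l := by
  rw [← Submodule.mem_toAddSubgroup, Submodule.span_int_eq_addSubgroupClosure] at hl
  induction hl using AddSubgroup.closure_induction generalizing z with
  | mem s hs => exact hg z s hs
  | zero => simp
  | add l m _ _ ihl ihm => rw [← add_assoc, ihm, ihl, map_add, add_assoc]
  | neg l _ ih =>
    rw [map_neg, ← sub_eq_add_neg (g z), eq_sub_iff_add_eq, ← ih, neg_add_cancel_right]

section Normed

variable {E F : Type*} [NormedAddCommGroup E] [NormedSpace ℝ E]
  [NormedAddCommGroup F] [NormedSpace ℝ F]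

theorem exists_mem_span_int_norm_sub_le {ι : Type*} [Fintype ι] (b : Basis ι ℝ E) (v : E) :
    ∃ l ∈ Submodule.span ℤ (Set.range b), ‖v - l‖ ≤ ∑ i, ‖b i‖ :=
  ⟨ZSpan.floor b v, (ZSpan.floor b v).2, ZSpan.norm_fract_le b v⟩

theorem norm_map_le_of_forall_mem_norm_map_le (f : E →L[ℝ] F) {S : Set E} {C : ℝ}
    (hS : ∀ v, ∃ s ∈ S, ‖v - s‖ ≤ C) (hf : ∀ s ∈ S, ‖f s‖ ≤ ‖s‖) (v : E) : ‖f v‖ ≤ ‖v‖ := by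
  refine le_of_forall_nat_mul_le_mul_add (C := ‖f‖ * C + C) fun n ↦ ?_
  obtain ⟨s, hs, hsC⟩ := hS ((n : ℝ) • v)
  calc n * ‖f v‖ = ‖f ((n : ℝ) • v - s) + f s‖ := by
        rw [← map_add, sub_add_cancel, map_smul, norm_smul, Real.norm_natCast]
    _ ≤ ‖f‖ * C + ‖s‖ := norm_add_le_of_le (f.le_opNorm_of_le hsC) (hf s hs)
    _ ≤ ‖f‖ * C + (‖(n : ℝ) • v‖ + C) := by
        gcongr
        exact (norm_le_norm_add_norm_sub _ _).trans (by gcongr)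
    _ = n * ‖v‖ + (‖f‖ * C + C) := by
        rw [norm_smul, Real.norm_natCast]
        ring

theorem norm_map_eq_of_norm_map_le_of_one_le_abs_det [FiniteDimensional ℝ E] (f : E →ₗ[ℝ] E)
    (hf : ∀ v, ‖f v‖ ≤ ‖v‖) (hdet : 1 ≤ |LinearMap.det f|) (v : E) : ‖f v‖ = ‖v‖ := by
  borelize E
  let μ : Measure E := Measure.addHaar
  by_contra hne
  obtain ⟨r, hfr, hrv⟩ := exists_between ((hf v).lt_of_ne hne)
  -- `f ⁻¹' B` has at most the volume of `B`, but it contains `B` together with the nonempty open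
  -- set `U`.
  let B := Metric.ball (0 : E) r
  let U := f ⁻¹' B ∩ (Metric.closedBall 0 r)ᶜ
  have hUopen : IsOpen U :=
    (Metric.isOpen_ball.preimage f.continuous_of_finiteDimensional).inter
      Metric.isClosed_closedBall.isOpen_compl
  have hUpos : 0 < μ U := hUopen.measure_pos μ ⟨v, by simpa [B] using hfr, by simpa using hrv⟩
  have hdisj : Disjoint B U :=
    (disjoint_compl_right.mono_left Metric.ball_subset_closedBall).mono_right
      Set.inter_subset_right
  have hsub : B ∪ U ⊆ f ⁻¹' B := by
    refine Set.union_subset (fun w hw ↦ ?_) Set.inter_subset_left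
    rw [mem_ball_zero_iff] at hw
    exact mem_ball_zero_iff.2 ((hf w).trans_lt hw)
  have hpre : μ (f ⁻¹' B) ≤ μ B := by
    rw [Measure.addHaar_preimage_linearMap μ (abs_pos.1 (one_pos.trans_le hdet)), abs_inv]
    exact mul_le_of_le_one_left' (ENNReal.ofReal_le_one.2 (inv_le_one_of_one_le₀ hdet))
  have hadd : μ B + μ U ≤ μ B := by
    rw [← measure_union hdisj hUopen.measurableSet]
    exact (measure_mono hsub).trans hpre
  exact hadd.not_gt (ENNReal.lt_add_right measure_ball_lt_top.ne hUpos.ne')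

theorem one_le_abs_det_of_measure_parallelepiped_le [MeasurableSpace E] [BorelSpace E]
    (μ : Measure E) [μ.IsAddHaarMeasure] {ι : Type*} [Fintype ι] (b : Basis ι ℝ E)
    (f : E →ₗ[ℝ] E) (h : μ (parallelepiped b) ≤ μ (parallelepiped (f ∘ b))) :
    1 ≤ |LinearMap.det f| := by
  have := b.finiteDimensional_of_finite
  have hpos : μ (parallelepiped b) ≠ 0 :=
    (Measure.measure_pos_of_nonempty_interior μ b.parallelepiped.interior_nonempty).ne'
  have hfin : μ (parallelepiped b) ≠ ⊤ := b.parallelepiped.isCompact.measure_ne_top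
  rw [← image_parallelepiped, Measure.addHaar_image_linearMap] at h
  rw [← ENNReal.one_le_ofReal]
  exact (ENNReal.mul_le_mul_iff_left hpos hfin).1 (by rwa [one_mul])

theorem norm_le_norm_sub_smul_of_norm_add_le {e v : E} (h : ‖e + v‖ ≤ ‖e‖) {s : ℝ} (hs : 0 ≤ s) :
    ‖e‖ ≤ ‖e - s • v‖ := by
  have hle : (1 + s) * ‖e‖ ≤ ‖e - s • v‖ + s * ‖e‖ :=
    calc (1 + s) * ‖e‖ = ‖(e - s • v) + s • (e + v)‖ := by
          rw [← norm_smul_of_nonneg (by positivity)]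
          congr 1
          module
      _ ≤ ‖e - s • v‖ + s * ‖e‖ := by
          refine norm_add_le_of_le le_rfl ?_
          rw [norm_smul_of_nonneg hs]
          gcongr
  linarith

theorem eq_zero_of_forall_mem_norm_add_le {S : Set E} {C : ℝ} (hS : ∀ v, ∃ s ∈ S, ‖v - s‖ ≤ C)
    {v : E} (h : ∀ s ∈ S, ‖s + v‖ ≤ ‖s‖) : v = 0 := by
  refine norm_le_zero_iff.1 (le_of_forall_nat_mul_le_mul_add (C := 2 * C) fun n ↦ ?_)
  obtain ⟨s, hs, hsC⟩ := hS ((n : ℝ) • v)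
  have hnear : ‖s‖ ≤ ‖(n : ℝ) • v - s‖ := by
    rw [norm_sub_rev]
    exact norm_le_norm_sub_smul_of_norm_add_le (h s hs) n.cast_nonneg
  calc n * ‖v‖ = ‖((n : ℝ) • v - s) + s‖ := by
        rw [sub_add_cancel, norm_smul, Real.norm_natCast]
    _ ≤ C + C := norm_add_le_of_le hsC (hnear.trans hsC)
    _ = n * 0 + 2 * C := by ring

theorem sub_eq_map_sub_of_lipschitzWith_one (L : E ≃ₗᵢ[ℝ] F) {g : E → F}
    (hLip : LipschitzWith 1 g) {S : Set E} {C : ℝ} (hS : ∀ v, ∃ s ∈ S, ‖v - s‖ ≤ C)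
    (hg : ∀ z, ∀ s ∈ S, g (z + s) = g z + L s) (x y : E) : g x - g y = L (x - y) := by
  let v := L.symm (g x - g y - L (x - y))
  have hLv : L v = g x - g y - L (x - y) := L.apply_symm_apply _
  suffices v = 0 by rwa [this, map_zero, eq_comm, sub_eq_zero] at hLv
  have hcover : ∀ w, ∃ e ∈ (x - y + ·) '' S, ‖w - e‖ ≤ C := by
    intro w
    obtain ⟨s, hs, hsC⟩ := hS (w - (x - y))
    exact ⟨x - y + s, ⟨s, hs, rfl⟩, by rwa [← sub_sub]⟩
  refine eq_zero_of_forall_mem_norm_add_le hcover ?_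
  rintro _ ⟨s, hs, rfl⟩
  calc ‖x - y + s + v‖ = ‖L (x - y + s + v)‖ := (L.norm_map _).symm
    _ = ‖g (x + s) - g y‖ := by
        rw [hg x s hs, map_add, map_add, hLv]
        congr 1
        abel
    _ ≤ ‖x + s - y‖ := by simpa using hLip.norm_sub_le (x + s) y
    _ = ‖x - y + s‖ := by rw [add_sub_right_comm]

theorem stmt_7_general {ι : Type*} [Fintype ι] [MeasurableSpace E] [BorelSpace E]
    (μ : Measure E) [μ.IsAddHaarMeasure] (b : Basis ι ℝ E) (c : ι → E)
    (hvol : μ (parallelepiped b) ≤ μ (parallelepiped c))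
    (g : E → E) (hg : ∀ z i, g (z + b i) = g z + c i) (hLip : LipschitzWith 1 g) :
    Isometry g := by
  have := b.finiteDimensional_of_finite
  let L : E →ₗ[ℝ] E := b.constr ℝ c
  have hLb (i : ι) : L (b i) = c i := b.constr_basis ℝ c i
  have hgL (z l : E) (hl : l ∈ Submodule.span ℤ (Set.range b)) : g (z + l) = g z + L l :=
    map_add_of_mem_span_int L.toAddMonoidHom (by simpa [hLb] using hg) hl z
  have hcover := exists_mem_span_int_norm_sub_le b
  have hL_le : ∀ v, ‖L v‖ ≤ ‖v‖ :=
    norm_map_le_of_forall_mem_norm_map_le L.toContinuousLinearMap hcover fun l hl ↦ by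
      have hLl : L l = g (0 + l) - g 0 := by rw [hgL 0 l hl, add_sub_cancel_left]
      rw [LinearMap.coe_toContinuousLinearMap', hLl]
      simpa only [NNReal.coe_one, one_mul, zero_add, sub_zero] using hLip.norm_sub_le (0 + l) 0
  have hdet : 1 ≤ |LinearMap.det L| :=
    one_le_abs_det_of_measure_parallelepiped_le μ b L (by rwa [show L ∘ b = c from funext hLb])
  have hL_eq := norm_map_eq_of_norm_map_le_of_one_le_abs_det L hL_le hdet
  let e : E ≃ₗᵢ[ℝ] E := LinearIsometry.toLinearIsometryEquiv ⟨L, hL_eq⟩ rfl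
  refine Isometry.of_dist_eq fun x y ↦ ?_
  rw [dist_eq_norm, dist_eq_norm, sub_eq_map_sub_of_lipschitzWith_one e hLip hcover hgL x y,
    e.norm_map]

end Normed

theorem volume_parallelepiped_complex (z w : ℂ) :
    volume (parallelepiped ![z, w]) = ENNReal.ofReal |((starRingEnd ℂ) z * w).im| := by
  have := Complex.finrank_real_complex_fact
  rw [← Complex.areaForm, Orientation.areaForm_to_volumeForm,
    ← AlternatingMap.measure_parallelepiped, Orientation.measure_eq_volume]

/-- A surjective 1-Lipschitz lattice-equivariant map between unit-area flat tori is an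
isometry (Thurston's argument that the Lipschitz metric separates points). -/
theorem stmt_7 (ω₁ ω₂ ζ₁ ζ₂ : ℂ)
    (hω : LinearIndependent ℝ ![ω₁, ω₂]) (hζ : LinearIndependent ℝ ![ζ₁, ζ₂])
    (hωarea : |((starRingEnd ℂ) ω₁ * ω₂).im| = 1)
    (hζarea : |((starRingEnd ℂ) ζ₁ * ζ₂).im| = 1)
    (g : ℂ → ℂ) (hsurj : Function.Surjective g)
    (heq : ∀ (z : ℂ) (m n : ℤ), g (z + m * ω₁ + n * ω₂) = g z + m * ζ₁ + n * ζ₂)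
    (hLip : ∀ x y : ℂ, ‖g x - g y‖ ≤ ‖x - y‖) :
    ∀ x y : ℂ, ‖g x - g y‖ = ‖x - y‖ := by
  let b := basisOfLinearIndependentOfCardEqFinrank hω (by simp)
  have hb : ⇑b = ![ω₁, ω₂] := coe_basisOfLinearIndependentOfCardEqFinrank _ _
  have hvol : volume (parallelepiped b) ≤ volume (parallelepiped ![ζ₁, ζ₂]) := by
    rw [hb, volume_parallelepiped_complex, volume_parallelepiped_complex, hωarea, hζarea]
  have hg (z : ℂ) : ∀ i, g (z + b i) = g z + ![ζ₁, ζ₂] i := by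
    rw [hb, Fin.forall_fin_two]
    exact ⟨by simpa using heq z 1 0, by simpa using heq z 0 1⟩
  have hg_isom : Isometry g := stmt_7_general volume b ![ζ₁, ζ₂] hvol g hg <|
    LipschitzWith.mk_one (by simpa only [dist_eq_norm] using hLip)
  simpa only [dist_eq_norm] using hg_isom.dist_eq
end

section
/- Let M : ℂ → ℂ be an ℝ-linear map with determinant 1 (as an ℝ-linear endomorphism of the 2-dimensional real vector space ℂ) and with operator norm ‖M‖ ≤ 1 with respect to the complex absolute value. Then M is a linear isometry: |M(z)| = |z| for all z ∈ ℂ. -/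
/-!
A set of operators that is compact, closed under composition and consists of invertible operators
contains the identity: a compact semigroup has an idempotent, and an invertible idempotent is `1`.
For a contraction `T` of a finite-dimensional space with `1 ≤ ‖det T‖`, apply this to the operators
`S` with `1 ≤ ‖det S‖` and `‖S x‖ ≤ ‖T x‖` for all `x`. That `S = 1` is one of them says
`‖x‖ ≤ ‖T x‖`.
-/

open Set

theorem one_mem_of_isCompact_of_forall_isUnit {M : Type*} [Monoid M] [TopologicalSpace M]
    [T2Space M] [SeparatelyContinuousMul M] {s : Set M} (hne : s.Nonempty) (hs : IsCompact s)
    (hmul : ∀ x ∈ s, ∀ y ∈ s, x * y ∈ s) (hunit : ∀ x ∈ s, IsUnit x) : 1 ∈ s := by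
  obtain ⟨e, he, hee⟩ :=
    exists_idempotent_in_compact_subsemigroup continuous_mul_const s hne hs hmul
  rwa [(IsIdempotentElem.iff_eq_one_of_isUnit (hunit e he)).mp hee] at he

section DominatedOperators

variable {𝕜 E : Type*} [NontriviallyNormedField 𝕜] [NormedAddCommGroup E] [NormedSpace 𝕜 E]
  {S S₁ S₂ T : E →L[𝕜] E}

/-- The operators that do not decrease volume (their determinant has norm at least `1`) and are
dominated pointwise in norm by `T`. For a contraction `T` they form a semigroup. -/
def dominatedOperators (T : E →L[𝕜] E) : Set (E →L[𝕜] E) :=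
  {S | (∀ x, ‖S x‖ ≤ ‖T x‖) ∧ 1 ≤ ‖S.det‖}

theorem self_mem_dominatedOperators (hdet : 1 ≤ ‖T.det‖) : T ∈ dominatedOperators T :=
  ⟨fun _ ↦ le_rfl, hdet⟩

theorem mul_mem_dominatedOperators (hT : ‖T‖ ≤ 1) (h₁ : S₁ ∈ dominatedOperators T)
    (h₂ : S₂ ∈ dominatedOperators T) : S₁ * S₂ ∈ dominatedOperators T := by
  refine ⟨fun x ↦ ?_, ?_⟩
  · calc ‖S₁ (S₂ x)‖ ≤ ‖T (S₂ x)‖ := h₁.1 (S₂ x)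
      _ ≤ ‖S₂ x‖ := by simpa only [one_mul] using T.le_of_opNorm_le hT (S₂ x)
      _ ≤ ‖T x‖ := h₂.1 x
  · have hdet : (S₁ * S₂).det = S₁.det * S₂.det := LinearMap.det_comp _ _
    rw [hdet, norm_mul]
    exact one_le_mul_of_one_le_of_one_le h₁.2 h₂.2

theorem isClosed_dominatedOperators [CompleteSpace 𝕜] (T : E →L[𝕜] E) :
    IsClosed (dominatedOperators T) := by
  have hdom : IsClosed {S : E →L[𝕜] E | ∀ x, ‖S x‖ ≤ ‖T x‖} := by
    simp only [ofPred_forall]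
    exact isClosed_iInter fun x ↦ isClosed_le (by fun_prop) continuous_const
  exact hdom.inter (isClosed_le continuous_const ContinuousLinearMap.continuous_det.norm)

theorem dominatedOperators_subset_closedBall (T : E →L[𝕜] E) :
    dominatedOperators T ⊆ Metric.closedBall 0 ‖T‖ := fun S hS ↦
  mem_closedBall_zero_iff.mpr <|
    S.opNorm_le_bound (norm_nonneg T) fun x ↦ (hS.1 x).trans (T.le_opNorm x)

variable [FiniteDimensional 𝕜 E]

theorem isCompact_dominatedOperators [ProperSpace 𝕜] (T : E →L[𝕜] E) :
    IsCompact (dominatedOperators T) := by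
  have : ProperSpace (E →L[𝕜] E) := FiniteDimensional.proper 𝕜 _
  exact (isCompact_closedBall 0 ‖T‖).of_isClosed_subset (isClosed_dominatedOperators T)
    (dominatedOperators_subset_closedBall T)

theorem isUnit_of_mem_dominatedOperators [CompleteSpace 𝕜] (hS : S ∈ dominatedOperators T) :
    IsUnit S := by
  have hdet : S.det ≠ 0 := norm_pos_iff.mp (zero_lt_one.trans_le hS.2)
  exact ⟨ContinuousLinearEquiv.toUnit (S.toContinuousLinearEquivOfDetNeZero hdet), rfl⟩

end DominatedOperators

theorem stmt_8_general {𝕜 E : Type*} [NontriviallyNormedField 𝕜] [ProperSpace 𝕜]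
    [NormedAddCommGroup E] [NormedSpace 𝕜 E] [FiniteDimensional 𝕜 E] (T : E →L[𝕜] E)
    (hdet : 1 ≤ ‖LinearMap.det (T : E →ₗ[𝕜] E)‖) (hnorm : ‖T‖ ≤ 1) (x : E) : ‖T x‖ = ‖x‖ := by
  have one_mem : 1 ∈ dominatedOperators T :=
    one_mem_of_isCompact_of_forall_isUnit ⟨T, self_mem_dominatedOperators hdet⟩
      (isCompact_dominatedOperators T)
      (fun _ h₁ _ h₂ ↦ mul_mem_dominatedOperators hnorm h₁ h₂)
      (fun _ hS ↦ isUnit_of_mem_dominatedOperators hS)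
  apply le_antisymm
  · simpa only [one_mul] using T.le_of_opNorm_le hnorm x
  · exact one_mem.1 x

/-- An ℝ-linear map `ℂ → ℂ` with determinant 1 and operator norm at most 1 is a linear
isometry. -/
theorem stmt_8 (M : ℂ →L[ℝ] ℂ)
    (hdet : LinearMap.det (M : ℂ →ₗ[ℝ] ℂ) = 1) (hnorm : ‖M‖ ≤ 1) :
    ∀ z : ℂ, ‖M z‖ = ‖z‖ :=
  stmt_8_general M (by rw [hdet, norm_one]) hnorm
end

section
/- Let w : ℂ → ℂ be an ℝ-linear map and let ω₁, ω₂ ∈ ℂ be linearly independent over ℝ. Then the operator norm of w equals the supremum of the stretch factors over nonzero lattice vectors: ‖w‖ = sup { |w(m·ω₁ + n·ω₂)| / |m·ω₁ + n·ω₂| : m, n ∈ ℤ, (m, n) ≠ (0, 0) }. -/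
/-!
The estimate `‖w x‖ ≤ M * ‖x‖` is invariant under rescaling `x`, so it passes from a lattice to
the vectors with a positive integer multiple in the lattice. These contain all rational
combinations of lattice vectors, hence are dense, and the estimate is a closed condition.
-/

section Isolator

variable {E : Type*} [AddCommGroup E] {L : AddSubgroup E} {x : E}

/-- The isolator (or pure hull) of a subgroup `L`: the elements having a positive multiple in `L`,
encoded as the preimage of the torsion subgroup of `E ⧸ L`. In a real vector space it is the
rational span of `L`, without reference to a `ℚ`-module structure. -/
def isolator (L : AddSubgroup E) : AddSubgroup E :=
  (AddCommGroup.torsion (E ⧸ L)).comap (QuotientAddGroup.mk' L)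

theorem mem_isolator : x ∈ isolator L ↔ ∃ n : ℕ, 0 < n ∧ n • x ∈ L := by
  change IsOfFinAddOrder (x : E ⧸ L) ↔ _
  simp only [isOfFinAddOrder_iff_nsmul_eq_zero, ← QuotientAddGroup.mk_nsmul,
    QuotientAddGroup.eq_zero_iff]

theorem ratCast_smul_mem_isolator {K : Type*} [DivisionRing K] [CharZero K] [Module K E]
    (q : ℚ) (hx : x ∈ L) : (q : K) • x ∈ isolator L := by
  refine mem_isolator.2 ⟨q.den, q.den_pos, ?_⟩
  have den_mul : (q.den : K) * q = q.num := by exact_mod_cast Rat.den_mul_eq_num q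
  rw [← Nat.cast_smul_eq_nsmul K, smul_smul, den_mul, Int.cast_smul_eq_zsmul]
  exact zsmul_mem hx q.num

variable [TopologicalSpace E] [Module ℝ E] [ContinuousSMul ℝ E]

theorem real_smul_mem_closure_isolator (t : ℝ) (hx : x ∈ L) :
    t • x ∈ closure (isolator L : Set E) :=
  Rat.denseRange_cast.induction_on (p := fun s : ℝ ↦ s • x ∈ closure (isolator L : Set E)) t
    (isClosed_closure.preimage (by fun_prop))
    fun q ↦ subset_closure (ratCast_smul_mem_isolator q hx)

theorem dense_isolator [IsTopologicalAddGroup E]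
    (hL : Dense (Submodule.span ℝ (L : Set E) : Set E)) : Dense (isolator L : Set E) := by
  suffices span_subset : (Submodule.span ℝ (L : Set E) : Set E) ⊆ closure (isolator L) from
    dense_closure.1 (hL.mono span_subset)
  intro y hy
  induction hy using Submodule.closure_induction with
  | zero => exact zero_mem (isolator L).topologicalClosure
  | add y z _ _ hy hz => exact (isolator L).topologicalClosure.add_mem hy hz
  | smul_mem t x hx => exact real_smul_mem_closure_isolator t hx

end Isolator

theorem norm_map_le_of_mem_isolator {E F : Type*} [SeminormedAddCommGroup E] [NormedSpace ℝ E]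
    [SeminormedAddCommGroup F] [NormedSpace ℝ F] {L : AddSubgroup E} (w : E →+ F) {M : ℝ}
    (hM : ∀ x ∈ L, ‖w x‖ ≤ M * ‖x‖) {x : E} (hx : x ∈ isolator L) : ‖w x‖ ≤ M * ‖x‖ := by
  obtain ⟨n, n_pos, hn⟩ := mem_isolator.1 hx
  have scaled : n * ‖w x‖ ≤ n * (M * ‖x‖) := by
    have := hM _ hn
    rwa [map_nsmul, ← Nat.cast_smul_eq_nsmul ℝ, ← Nat.cast_smul_eq_nsmul ℝ, norm_smul, norm_smul,
      Real.norm_natCast, mul_left_comm] at this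
  exact le_of_mul_le_mul_left scaled (by exact_mod_cast n_pos)

theorem stmt_9_general {E F : Type*} [NormedAddCommGroup E] [NormedSpace ℝ E] [Nontrivial E]
    [SeminormedAddCommGroup F] [NormedSpace ℝ F] (w : E →L[ℝ] F) {L : AddSubgroup E}
    (hL : Dense (Submodule.span ℝ (L : Set E) : Set E)) :
    IsLUB ((fun x ↦ ‖w x‖ / ‖x‖) '' (L \ {0})) ‖w‖ := by
  refine ⟨Set.forall_mem_image.2 fun x _ ↦ w.ratio_le_opNorm x, fun M hM ↦ ?_⟩
  have bound_on_L : ∀ x ∈ L, ‖w x‖ ≤ M * ‖x‖ := by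
    intro x hx
    obtain rfl | x_ne := eq_or_ne x 0
    · simp
    · exact (div_le_iff₀ (norm_pos_iff.2 x_ne)).1 (hM ⟨x, ⟨hx, x_ne⟩, rfl⟩)
  have bound (x : E) : ‖w x‖ ≤ M * ‖x‖ :=
    (dense_isolator hL).induction (P := fun x ↦ ‖w x‖ ≤ M * ‖x‖)
      (fun x hx ↦ norm_map_le_of_mem_isolator (w : E →+ F) bound_on_L hx)
      (isClosed_le (by fun_prop) (by fun_prop)) x
  obtain ⟨v, v_ne⟩ := exists_ne (0 : E)
  have M_nonneg : 0 ≤ M :=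
    nonneg_of_mul_nonneg_left ((norm_nonneg _).trans (bound v)) (norm_pos_iff.2 v_ne)
  exact w.opNorm_le_bound M_nonneg bound

theorem image_closure_pair_diff_zero {A B : Type*} [AddCommGroup A] {x y : A}
    (hxy : LinearIndependent ℤ ![x, y]) (f : A → B) :
    f '' (AddSubgroup.closure {x, y} \ {0}) =
      {t | ∃ m n : ℤ, (m, n) ≠ (0, 0) ∧ t = f (m • x + n • y)} := by
  have combination_eq_zero (m n : ℤ) : m • x + n • y = 0 ↔ (m, n) = (0, 0) := by
    refine ⟨fun h ↦ Prod.ext_iff.2 (LinearIndependent.pair_iff.1 hxy m n h), ?_⟩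
    rintro ⟨⟩
    simp
  ext t
  constructor
  · rintro ⟨z, ⟨hz, z_ne⟩, rfl⟩
    obtain ⟨m, n, rfl⟩ := AddSubgroup.mem_closure_pair.1 hz
    exact ⟨m, n, mt (combination_eq_zero m n).2 z_ne, rfl⟩
  · rintro ⟨m, n, mn_ne, rfl⟩
    exact ⟨_, ⟨AddSubgroup.mem_closure_pair.2 ⟨m, n, rfl⟩, mt (combination_eq_zero m n).1 mn_ne⟩,
      rfl⟩

theorem span_closure_pair_eq_top {K E : Type*} [DivisionRing K] [AddCommGroup E] [Module K E]
    (hE : Module.finrank K E = 2) {x y : E} (hxy : LinearIndependent K ![x, y]) :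
    Submodule.span K (AddSubgroup.closure {x, y} : Set E) = ⊤ := by
  have span_pair : Submodule.span K {x, y} = ⊤ := by
    rw [← Matrix.range_cons_cons_empty x y ![]]
    exact hxy.span_eq_top_of_card_eq_finrank (by simp [hE])
  exact top_unique (span_pair.ge.trans (Submodule.span_mono AddSubgroup.subset_closure))

/-- The operator norm of an ℝ-linear map `ℂ → ℂ` equals the supremum of stretch factors
over nonzero vectors of the lattice `ℤω₁ + ℤω₂` (Thurston's κ equals λ for flat tori). -/
theorem stmt_9 (w : ℂ →L[ℝ] ℂ) (ω₁ ω₂ : ℂ) (hindep : LinearIndependent ℝ ![ω₁, ω₂]) :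
    ‖w‖ = sSup {t : ℝ | ∃ m n : ℤ, (m, n) ≠ (0, 0) ∧
      t = ‖w (m * ω₁ + n * ω₂)‖ / ‖m * ω₁ + n * ω₂‖} := by
  have h := stmt_9_general w (L := AddSubgroup.closure {ω₁, ω₂})
    (by simp [span_closure_pair_eq_top Complex.finrank_real_complex hindep])
  rw [image_closure_pair_diff_zero (hindep.restrict_scalars' ℤ)] at h
  simpa only [zsmul_eq_mul] using (h.csSup_eq h.nonempty).symm
end

section
/- Let τ and τ' be points of the upper half-plane ℍ ⊂ ℂ. Let w₁ : ℂ → ℂ be the unique ℝ-linear map with w₁(1) = 1 and w₁(τ) = τ', and let w₂ : ℂ → ℂ be the unique ℝ-linear map with w₂(1) = 1 and w₂(τ') = τ. Then log ‖w₁‖ + log ‖w₂‖ = dist(τ, τ'), where ‖·‖ denotes the operator norm with respect to the complex absolute value and dist is the hyperbolic (Poincaré) distance on ℍ. (This is the statement that the symmetrization of the Belkhirat–Papadopoulos–Troyanov weak metric κ' coincides with the hyperbolic metric under the standard identification of the Teichmüller space of the torus with ℍ.) -/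
/-!
A real-linear map `w z = p * z + q * conj z` of the plane has operator norm `‖p‖ + ‖q‖`, and
`w τ - conj τ * w 1 = p * (τ - conj τ)` while `w τ - τ * w 1 = -q * (τ - conj τ)`. When `w 1 = 1`
and `w τ = τ'`, the left-hand sides are `τ' - conj τ` and `τ' - τ`, whose norms add up to
`2 * √(τ.im * τ'.im) * exp (dist τ τ' / 2)`. Hence
`log ‖w‖ = dist τ τ' / 2 + (log τ'.im - log τ.im) / 2`, and the last term is antisymmetric in
`τ` and `τ'`.
-/

open scoped ComplexConjugate

theorem exists_forall_eq_mul_add_mul_conj (w : ℂ →ₗ[ℝ] ℂ) :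
    ∃ p q : ℂ, ∀ z, w z = p * z + q * conj z := by
  refine ⟨(w 1 - Complex.I * w Complex.I) / 2, (w 1 + Complex.I * w Complex.I) / 2, fun z ↦ ?_⟩
  have hwz : w z = z.re * w 1 + z.im * w Complex.I := by
    conv_lhs => rw [← Complex.re_add_im z, ← mul_one (z.re : ℂ)]
    simp only [← Complex.real_smul, map_add, map_smul]
  rw [hwz, Complex.re_eq_add_conj, Complex.im_eq_sub_conj]
  field_simp
  linear_combination (z - conj z) * w Complex.I * Complex.I_sq

theorem exists_norm_eq_one_norm_mul_add_mul_conj_eq (p q : ℂ) :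
    ∃ u : ℂ, ‖u‖ = 1 ∧ ‖p * u + q * conj u‖ = ‖p‖ + ‖q‖ := by
  -- Rotating by half the difference of the arguments aligns the two summands.
  refine ⟨Complex.exp (((q.arg - p.arg) / 2 : ℝ) * Complex.I),
    Complex.norm_exp_ofReal_mul_I _, ?_⟩
  set θ : ℝ := (q.arg - p.arg) / 2 with hθ
  set φ : ℝ := (p.arg + q.arg) / 2 with hφ
  have hp : p * Complex.exp (θ * Complex.I) = ‖p‖ * Complex.exp (φ * Complex.I) := by
    conv_lhs => rw [← Complex.norm_mul_exp_arg_mul_I p]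
    rw [mul_assoc, ← Complex.exp_add, ← add_mul, ← Complex.ofReal_add,
      show p.arg + θ = φ by rw [hθ, hφ]; ring]
  have hq : q * conj (Complex.exp (θ * Complex.I)) = ‖q‖ * Complex.exp (φ * Complex.I) := by
    conv_lhs => rw [← Complex.norm_mul_exp_arg_mul_I q]
    rw [← Complex.exp_conj, map_mul, Complex.conj_ofReal, Complex.conj_I, mul_neg, ← neg_mul,
      mul_assoc, ← Complex.exp_add, ← add_mul, ← Complex.ofReal_neg, ← Complex.ofReal_add,
      show q.arg + -θ = φ by rw [hθ, hφ]; ring]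
  rw [hp, hq, ← add_mul, norm_mul, Complex.norm_exp_ofReal_mul_I, mul_one,
    ← Complex.ofReal_add, Complex.norm_of_nonneg (by positivity)]

theorem opNorm_eq_of_forall_eq_mul_add_mul_conj {w : ℂ →L[ℝ] ℂ} {p q : ℂ}
    (hw : ∀ z, w z = p * z + q * conj z) : ‖w‖ = ‖p‖ + ‖q‖ := by
  refine le_antisymm (w.opNorm_le_bound (by positivity) fun z ↦ ?_) ?_
  · calc ‖w z‖ ≤ ‖p * z‖ + ‖q * conj z‖ := hw z ▸ norm_add_le _ _
      _ = (‖p‖ + ‖q‖) * ‖z‖ := by rw [norm_mul, norm_mul, RCLike.norm_conj, add_mul]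
  · obtain ⟨u, hu, hpq⟩ := exists_norm_eq_one_norm_mul_add_mul_conj_eq p q
    rw [← hpq, ← hw]
    exact w.unit_le_opNorm u hu.le

theorem opNorm_mul_two_mul_abs_im (w : ℂ →L[ℝ] ℂ) (z : ℂ) :
    ‖w‖ * (2 * |z.im|) = ‖w z - z * w 1‖ + ‖w z - conj z * w 1‖ := by
  obtain ⟨p, q, hw⟩ := exists_forall_eq_mul_add_mul_conj w.toLinearMap
  have hw : ∀ z, w z = p * z + q * conj z := hw
  have hp : w z - conj z * w 1 = p * (z - conj z) := by
    rw [hw, hw, map_one]; ring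
  have hq : w z - z * w 1 = -q * (z - conj z) := by
    rw [hw, hw, map_one]; ring
  have him : ‖z - conj z‖ = 2 * |z.im| := by
    simp [Complex.sub_conj]
  rw [opNorm_eq_of_forall_eq_mul_add_mul_conj hw, hp, hq, norm_mul, norm_mul, norm_neg, him]
  ring

theorem opNorm_eq_mul_exp_half_dist {τ τ' : UpperHalfPlane} {w : ℂ →L[ℝ] ℂ}
    (hw : w τ = τ' * w 1) :
    ‖w‖ = ‖w 1‖ * (√(τ'.im / τ.im) * Real.exp (dist τ τ' / 2)) := by
  have hτ := τ.im_pos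
  have hsum : ‖w‖ * (2 * τ.im) =
      ‖w 1‖ * (dist (τ' : ℂ) τ + dist (τ' : ℂ) (conj (τ : ℂ))) := by
    have hnorm := opNorm_mul_two_mul_abs_im w τ
    rw [hw, ← sub_mul, ← sub_mul, norm_mul, norm_mul, ← dist_eq_norm, ← dist_eq_norm,
      UpperHalfPlane.coe_im, abs_of_pos hτ] at hnorm
    rw [hnorm]; ring
  have hsqrt : √(τ'.im * τ.im) = √(τ'.im / τ.im) * τ.im := by
    rw [show τ'.im * τ.im = τ'.im / τ.im * τ.im ^ 2 by field_simp, Real.sqrt_mul (by positivity),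
      Real.sqrt_sq hτ.le]
  rw [dist_comm τ τ', UpperHalfPlane.exp_half_dist, hsqrt]
  field_simp
  linear_combination hsum

theorem log_opNorm_eq_half_dist_add_half_log_im_sub {τ τ' : UpperHalfPlane} {w : ℂ →L[ℝ] ℂ}
    (h1 : w 1 = 1) (hτ : w τ = τ') :
    Real.log ‖w‖ = dist τ τ' / 2 + (Real.log τ'.im - Real.log τ.im) / 2 := by
  have him := τ.im_pos
  have him' := τ'.im_pos
  rw [opNorm_eq_mul_exp_half_dist (by rw [hτ, h1, mul_one]), h1, norm_one, one_mul,
    Real.log_mul (by positivity) (by positivity), Real.log_exp, Real.log_sqrt (by positivity),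
    Real.log_div him'.ne' him.ne', add_comm]

/-- The symmetrization of the Belkhirat–Papadopoulos–Troyanov weak metric κ' coincides
with the hyperbolic metric: for the affine maps `w₁ : τ → τ'` and `w₂ : τ' → τ` fixing the
lattice generator 1, `log ‖w₁‖ + log ‖w₂‖ = dist τ τ'`. -/
theorem stmt_15 (τ τ' : UpperHalfPlane) (w₁ w₂ : ℂ →L[ℝ] ℂ)
    (h11 : w₁ 1 = 1) (h12 : w₁ (τ : ℂ) = (τ' : ℂ))
    (h21 : w₂ 1 = 1) (h22 : w₂ (τ' : ℂ) = (τ : ℂ)) :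
    Real.log ‖w₁‖ + Real.log ‖w₂‖ = dist τ τ' := by
  rw [log_opNorm_eq_half_dist_add_half_log_im_sub h11 h12,
    log_opNorm_eq_half_dist_add_half_log_im_sub h21 h22, dist_comm τ' τ]
  ring
end
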